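/- arXiv:2407.12921 — 3 statements merged into one kernel-verified Lean document; each statement's English description precedes it below -/
import Mathlib

section
/- Let S be a compact Hausdorff space equipped with its Baire σ-algebra 𝒮 (the smallest σ-algebra making all continuous real-valued functions on S measurable). If {X_n ; n ≥ 1} is an exchangeable process with values in S, then there exists a unique measure μ on the Baire σ-algebra of ℳ(S) such that, for each k ≥ 1, the law P_k of X_1^k admits the representation P_k = M_{k,μ}, i.e., P_k(A) = ∫_{ℳ(S)} Q^k(A) dμ(Q) for all A in the product σ-algebra 𝒮^k. -/
open MeasureTheory
open scoped ENNReal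

/-- The Baire σ-algebra of a topological space: the smallest σ-algebra making all
continuous real-valued functions measurable. -/
def baireSigma (X : Type*) [TopologicalSpace X] : MeasurableSpace X :=
  ⨆ f : C(X, ℝ), MeasurableSpace.comap f (borel ℝ)

/-- The weak topology on the space `ℳ(S)` of probability measures on `S`: the topology
induced by the maps `Q ↦ ∫ f dQ`, `f : S → ℝ` continuous. -/
noncomputable def weakTopology (S : Type*) [TopologicalSpace S] [MeasurableSpace S] :
    TopologicalSpace (ProbabilityMeasure S) :=
  TopologicalSpace.induced
    (fun (Q : ProbabilityMeasure S) (f : C(S, ℝ)) => ∫ x, f x ∂(Q : Measure S))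
    inferInstance

/-- The Baire σ-algebra on `ℳ(S)`, for the weak topology. -/
noncomputable def baireOnProbabilityMeasures (S : Type*) [TopologicalSpace S]
    [MeasurableSpace S] : MeasurableSpace (ProbabilityMeasure S) :=
  @baireSigma (ProbabilityMeasure S) (weakTopology S)

/-!
Draw `N` points according to the law of `X_1^N` and form their empirical measure: its law `μ_N` is
a measure on `ℳ(S)`. The moment `∫ ∏ᵢ (∫ fᵢ dQ) dμ_N` is an average of `𝔼 ∏ᵢ fᵢ(X_{φ(i)})` over all
maps `φ : {1,…,k} → {1,…,N}`. By exchangeability the injective `φ` all contribute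
`∫ ∏ᵢ fᵢ dP_k`, and their proportion tends to `1`. Both `ℳ(S)` and `ℳ(ℳ(S))` are compact by the
Riesz representation theorem, so `μ_N` has a cluster point `μ`, whose moments are exactly those
limits, and this says that `P_k = M_{k,μ}`.

By Stone–Weierstrass the monomials `Q ↦ ∏ᵢ ∫ fᵢ dQ` span a dense subspace of `C(ℳ(S), ℝ)`. Hence the
moments determine `μ`, and the Baire σ-algebra of `ℳ(S)` is the one generated by the evaluations
`Q ↦ Q(A)`.
-/

namespace HewittSavage

open Filter ProbabilityTheory Topology
open scoped BigOperators BoundedContinuousFunction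

/-- The typeclass of spaces whose σ-algebra is the Baire one, the analogue of `BorelSpace`. -/
class HasBaireSigma (X : Type*) [TopologicalSpace X] [m : MeasurableSpace X] : Prop where
  eq_baireSigma : m = baireSigma X

/-- The zero sets of `X`. The zero set of `f ⊔ 0` is written `f ⁻¹' Set.Iic 0`, so that no
positivity has to be assumed of `f`. -/
def zeroSets (X : Type*) [TopologicalSpace X] : Set (Set X) :=
  Set.range fun f : C(X, ℝ) => f ⁻¹' Set.Iic 0

section Baire

variable {X : Type*} [TopologicalSpace X]

theorem univ_mem_zeroSets : Set.univ ∈ zeroSets X := ⟨0, by ext; simp⟩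

theorem isPiSystem_zeroSets : IsPiSystem (zeroSets X) := by
  rintro _ ⟨f, rfl⟩ _ ⟨g, rfl⟩ _
  exact ⟨f ⊔ g, by ext; simp⟩

theorem baireSigma_eq_generateFrom_zeroSets :
    baireSigma X = MeasurableSpace.generateFrom (zeroSets X) := by
  apply le_antisymm
  · refine iSup_le fun f => ?_
    rw [← BorelSpace.measurable_eq (α := ℝ), ← measurable_iff_comap_le]
    refine @measurable_of_Iic _ _ _ _ _ (MeasurableSpace.generateFrom _) _ _ _ _ fun a => ?_
    exact MeasurableSpace.measurableSet_generateFrom ⟨f - ContinuousMap.const X a, by ext; simp⟩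
  · refine MeasurableSpace.generateFrom_le ?_
    rintro _ ⟨f, rfl⟩
    exact le_iSup (fun f : C(X, ℝ) => MeasurableSpace.comap f (borel ℝ)) f _
      ⟨_, isClosed_Iic.measurableSet, rfl⟩

theorem baireSigma_le_borel : baireSigma X ≤ borel X :=
  iSup_le fun f => @Measurable.comap_le _ _ (borel X) (borel ℝ) f f.continuous.borel_measurable

theorem measurable_baireSigma (f : C(X, ℝ)) : Measurable[baireSigma X] f := by
  rw [measurable_iff_comap_le, BorelSpace.measurable_eq (α := ℝ)]
  exact le_iSup (fun f : C(X, ℝ) => MeasurableSpace.comap f (borel ℝ)) f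

variable [m : MeasurableSpace X] [HasBaireSigma X]

theorem generateFrom_zeroSets : MeasurableSpace.generateFrom (zeroSets X) = m := by
  rw [HasBaireSigma.eq_baireSigma (X := X), baireSigma_eq_generateFrom_zeroSets]

theorem measurable_continuousMap (f : C(X, ℝ)) : Measurable f := by
  have := measurable_baireSigma f
  rwa [← HasBaireSigma.eq_baireSigma (X := X)] at this

theorem integrable_continuousMap [CompactSpace X] (μ : Measure X) [IsFiniteMeasure μ]
    (f : C(X, ℝ)) : Integrable f μ :=
  .of_bound (measurable_continuousMap f).aestronglyMeasurable ‖f‖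
    (ae_of_all _ f.norm_coe_le_norm)

theorem ext_of_forall_integral_continuousMap_eq {μ ν : Measure X} [IsFiniteMeasure μ]
    [IsFiniteMeasure ν] (h : ∀ f : C(X, ℝ), ∫ x, f x ∂μ = ∫ x, f x ∂ν) : μ = ν := by
  have map_eq (f : C(X, ℝ)) : μ.map f = ν.map f := by
    refine ext_of_forall_integral_eq_of_IsFiniteMeasure fun g => ?_
    have hf := measurable_continuousMap f
    rw [integral_map hf.aemeasurable (by fun_prop), integral_map hf.aemeasurable (by fun_prop)]
    exact h (g.toContinuousMap.comp f)
  have zeroSet_eq : ∀ s ∈ zeroSets X, μ s = ν s := by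
    rintro _ ⟨f, rfl⟩
    have hf := measurable_continuousMap f
    rw [← Measure.map_apply hf measurableSet_Iic, map_eq, Measure.map_apply hf measurableSet_Iic]
  exact ext_of_generate_finite _ generateFrom_zeroSets.symm isPiSystem_zeroSets zeroSet_eq
    (zeroSet_eq _ univ_mem_zeroSets)

theorem measurable_measure_of_forall_integral_continuousMap {Ω : Type*} [MeasurableSpace Ω]
    {κ : Ω → Measure X} [∀ ω, IsFiniteMeasure (κ ω)]
    (h : ∀ f : C(X, ℝ), Measurable fun ω => ∫ x, f x ∂κ ω) : Measurable κ := by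
  have measurable_zeroSet : ∀ s ∈ zeroSets X, Measurable fun ω => κ ω s := by
    rintro _ ⟨f, rfl⟩
    have hf := measurable_continuousMap f
    simp_rw [← Measure.map_apply hf measurableSet_Iic]
    refine measurable_of_tendsto_metrizable (fun n => ?_) <| tendsto_pi_nhds.2 fun ω =>
      HasOuterApproxClosed.tendsto_lintegral_apprSeq isClosed_Iic ((κ ω).map f)
    set g := (isClosed_Iic (a := (0 : ℝ))).apprSeq n
    have lintegral_eq (ω : Ω) :
        ∫⁻ y, g y ∂(κ ω).map f = ENNReal.ofReal (∫ x, (g (f x) : ℝ) ∂κ ω) := by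
      rw [← integral_map hf.aemeasurable (f := fun y => (g y : ℝ)) (by fun_prop),
        ← g.toReal_lintegral_coe_eq_integral,
        ENNReal.ofReal_toReal (g.lintegral_lt_top_of_nnreal _).ne]
    simp_rw [lintegral_eq]
    exact (h ⟨fun x => g (f x), by fun_prop⟩).ennreal_ofReal
  exact .measure_of_isPiSystem generateFrom_zeroSets.symm isPiSystem_zeroSets measurable_zeroSet
    (measurable_zeroSet _ univ_mem_zeroSets)

end Baire

section Pi

variable {ι : Type*} [Fintype ι]

theorem ext_of_forall_integral_prod_boundedContinuousFunction_eq {X : ι → Type*}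
    [∀ i, TopologicalSpace (X i)] [∀ i, MeasurableSpace (X i)] [∀ i, BorelSpace (X i)]
    [∀ i, HasOuterApproxClosed (X i)] {μ ν : Measure (∀ i, X i)} [IsFiniteMeasure μ]
    [IsFiniteMeasure ν]
    (h : ∀ f : ∀ i, X i →ᵇ ℝ, ∫ x, ∏ i, f i (x i) ∂μ = ∫ x, ∏ i, f i (x i) ∂ν) : μ = ν := by
  -- A dummy empty factor reduces the claim to the two-factor version in Mathlib.
  let e : (∀ i, X i) ≃ᵐ (∀ i, X i) × (Empty → ℝ) :=
    { toFun x := (x, isEmptyElim)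
      invFun := Prod.fst
      left_inv _ := rfl
      right_inv _ := Prod.ext rfl (Subsingleton.elim _ _) }
  rw [← e.map_measurableEquiv_injective.eq_iff]
  refine Measure.ext_of_integral_prod_mul_prod_boundedContinuousFunction fun f g => ?_
  rw [integral_map_equiv, integral_map_equiv]
  simpa [e] using h f

variable {X : Type*} [TopologicalSpace X]

theorem norm_prod_continuousMap_le [CompactSpace X] (f : ι → C(X, ℝ)) (x : ι → X) :
    ‖∏ i, f i (x i)‖ ≤ ∏ i, ‖f i‖ := by
  rw [norm_prod]
  exact Finset.prod_le_prod (fun i _ => norm_nonneg _) fun i _ => (f i).norm_coe_le_norm _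

variable [MeasurableSpace X]

theorem abs_integral_prod_continuousMap_le [CompactSpace X] (μ : Measure (ι → X))
    [IsProbabilityMeasure μ] (f : ι → C(X, ℝ)) : |∫ x, ∏ i, f i (x i) ∂μ| ≤ ∏ i, ‖f i‖ := by
  simpa using norm_integral_le_of_norm_le_const (ae_of_all μ (norm_prod_continuousMap_le f))

variable [HasBaireSigma X]

theorem measurable_prod_continuousMap (f : ι → C(X, ℝ)) :
    Measurable fun x : ι → X => ∏ i, f i (x i) :=
  Finset.measurable_prod _ fun i _ => (measurable_continuousMap (f i)).comp (measurable_pi_apply i)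

theorem integrable_prod_continuousMap [CompactSpace X] (μ : Measure (ι → X)) [IsFiniteMeasure μ]
    (f : ι → C(X, ℝ)) : Integrable (fun x : ι → X => ∏ i, f i (x i)) μ :=
  .of_bound (measurable_prod_continuousMap f).aestronglyMeasurable (∏ i, ‖f i‖)
    (ae_of_all _ (norm_prod_continuousMap_le f))

theorem ext_of_forall_integral_prod_continuousMap_eq {μ ν : Measure (ι → X)} [IsFiniteMeasure μ]
    [IsFiniteMeasure ν]
    (h : ∀ f : ι → C(X, ℝ), ∫ x, ∏ i, f i (x i) ∂μ = ∫ x, ∏ i, f i (x i) ∂ν) : μ = ν := by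
  have measurable_coords (f : ι → C(X, ℝ)) : Measurable fun (x : ι → X) i => f i (x i) :=
    measurable_pi_lambda _ fun i => (measurable_continuousMap (f i)).comp (measurable_pi_apply i)
  have map_eq (f : ι → C(X, ℝ)) : μ.map (fun x i => f i (x i)) = ν.map fun x i => f i (x i) := by
    refine ext_of_forall_integral_prod_boundedContinuousFunction_eq fun g => ?_
    have hf := measurable_coords f
    have hg : Measurable fun y : ι → ℝ => ∏ i, g i (y i) := by fun_prop
    rw [integral_map hf.aemeasurable hg.aestronglyMeasurable,
      integral_map hf.aemeasurable hg.aestronglyMeasurable]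
    exact h fun i => (g i).toContinuousMap.comp (f i)
  have box_eq : ∀ s ∈ Set.univ.pi '' Set.univ.pi fun _ : ι => zeroSets X, μ s = ν s := by
    rintro _ ⟨s, hs, rfl⟩
    choose f hf using fun i => hs i (Set.mem_univ i)
    obtain rfl : (fun i => f i ⁻¹' Set.Iic 0) = s := funext hf
    have hbox : MeasurableSet (Set.univ.pi fun _ : ι => Set.Iic (0 : ℝ)) :=
      .univ_pi fun _ => measurableSet_Iic
    have preimage_eq : (fun (x : ι → X) i => f i (x i)) ⁻¹' Set.univ.pi (fun _ => Set.Iic (0 : ℝ)) =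
        Set.univ.pi fun i => f i ⁻¹' Set.Iic 0 := rfl
    rw [← preimage_eq, ← Measure.map_apply (measurable_coords f) hbox, map_eq,
      Measure.map_apply (measurable_coords f) hbox]
  have generateFrom_boxes := generateFrom_eq_pi (C := fun _ : ι => zeroSets X)
    (fun _ => generateFrom_zeroSets)
    fun _ => ⟨fun _ => Set.univ, fun _ => univ_mem_zeroSets, Set.iUnion_const _⟩
  exact ext_of_generate_finite _ generateFrom_boxes.symm (.pi fun _ => isPiSystem_zeroSets) box_eq
    (box_eq _ ⟨fun _ => Set.univ, fun _ _ => univ_mem_zeroSets, Set.pi_univ _⟩)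

end Pi

section Riesz

variable {X : Type*} [TopologicalSpace X] [CompactSpace X]

theorem exists_borel_measure_integral_eq [T2Space X] [MeasurableSpace X] [BorelSpace X]
    (Λ : C(X, ℝ) →ₚ[ℝ] ℝ) :
    ∃ μ : Measure X, IsFiniteMeasure μ ∧ ∀ f : C(X, ℝ), ∫ x, f x ∂μ = Λ f := by
  let Λc : CompactlySupportedContinuousMap X ℝ →ₚ[ℝ] ℝ :=
    .mk₀ { toFun f := Λ f.toContinuousMap
           map_add' _ _ := map_add Λ _ _
           map_smul' _ _ := map_smul Λ _ _ } fun _ hf => map_nonneg Λ hf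
  exact ⟨RealRMK.rieszMeasure Λc, inferInstance, fun f =>
    RealRMK.integral_rieszMeasure Λc (CompactlySupportedContinuousMap.continuousMapEquiv f)⟩

variable [m : MeasurableSpace X] [HasBaireSigma X]

theorem exists_measure_integral_eq [T2Space X] (Λ : C(X, ℝ) →ₚ[ℝ] ℝ) :
    ∃ μ : Measure X, IsFiniteMeasure μ ∧ ∀ f : C(X, ℝ), ∫ x, f x ∂μ = Λ f := by
  have hle : m ≤ borel X := HasBaireSigma.eq_baireSigma.trans_le baireSigma_le_borel
  obtain ⟨ν, hν, hΛ⟩ :=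
    @exists_borel_measure_integral_eq X _ _ _ (borel X) (@BorelSpace.mk X _ (borel X) rfl) Λ
  have integral_eq (f : C(X, ℝ)) :=
    @integral_trim _ _ _ _ m (borel X) ν hle f (measurable_continuousMap f).stronglyMeasurable
  exact ⟨@Measure.trim X m (borel X) ν hle, @isFiniteMeasure_trim _ m (borel X) ν hle hν,
    fun f => (integral_eq f).symm.trans (hΛ f)⟩

/-- Integration against a finite Baire measure, as a functional on `C(X, ℝ)`. -/
noncomputable def integralCLM (μ : Measure X) [IsFiniteMeasure μ] : C(X, ℝ) →L[ℝ] ℝ :=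
  LinearMap.mkContinuous
    { toFun f := ∫ x, f x ∂μ
      map_add' f g := integral_add (integrable_continuousMap μ f) (integrable_continuousMap μ g)
      map_smul' c f := integral_const_mul c f }
    (μ.real Set.univ) fun f => by
      rw [mul_comm]; exact norm_integral_le_of_norm_le_const (ae_of_all _ f.norm_coe_le_norm)

theorem ext_of_integral_eqOn_of_dense_span {μ ν : Measure X} [IsFiniteMeasure μ]
    [IsFiniteMeasure ν] {A : Set C(X, ℝ)} (hA : Dense (Submodule.span ℝ A : Set C(X, ℝ)))
    (h : ∀ f ∈ A, ∫ x, f x ∂μ = ∫ x, f x ∂ν) : μ = ν :=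
  have integralCLM_eq : integralCLM μ = integralCLM ν := ContinuousLinearMap.ext_on hA h
  ext_of_forall_integral_continuousMap_eq fun f => DFunLike.congr_fun integralCLM_eq f

end Riesz

attribute [local instance] weakTopology

section WeakTopology

variable {X : Type*} [TopologicalSpace X] [MeasurableSpace X]

theorem isInducing_integral :
    IsInducing fun (Q : ProbabilityMeasure X) (f : C(X, ℝ)) => ∫ x, f x ∂(Q : Measure X) := ⟨rfl⟩

/-- The continuous function `Q ↦ ∫ f dQ` on `ℳ(X)`. -/
noncomputable def integralEval (f : C(X, ℝ)) : C(ProbabilityMeasure X, ℝ) where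
  toFun Q := ∫ x, f x ∂(Q : Measure X)
  continuous_toFun := (continuous_apply f).comp isInducing_integral.continuous

theorem integralEval_apply (f : C(X, ℝ)) (Q : ProbabilityMeasure X) :
    integralEval f Q = ∫ x, f x ∂(Q : Measure X) := rfl

theorem abs_integralEval_le [CompactSpace X] (f : C(X, ℝ)) (Q : ProbabilityMeasure X) :
    |integralEval f Q| ≤ ‖f‖ := by
  simpa [integralEval_apply] using
    norm_integral_le_of_norm_le_const (ae_of_all (Q : Measure X) f.norm_coe_le_norm)

variable [HasBaireSigma X]

theorem injective_integral :
    Function.Injective fun (Q : ProbabilityMeasure X) (f : C(X, ℝ)) => ∫ x, f x ∂(Q : Measure X) :=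
  fun _ _ h => ProbabilityMeasure.toMeasure_injective <|
    ext_of_forall_integral_continuousMap_eq fun f => congrFun h f

instance : T2Space (ProbabilityMeasure X) :=
  .of_injective_continuous injective_integral isInducing_integral.continuous

variable [CompactSpace X]

theorem range_integral [T2Space X] :
    Set.range (fun (Q : ProbabilityMeasure X) (f : C(X, ℝ)) => ∫ x, f x ∂(Q : Measure X)) =
      Set.range ((↑) : (C(X, ℝ) →ₗ[ℝ] ℝ) → C(X, ℝ) → ℝ) ∩ {φ | ∀ f, 0 ≤ f → 0 ≤ φ f} ∩
        {φ | φ 1 = 1} := by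
  ext φ
  constructor
  · rintro ⟨Q, rfl⟩
    exact ⟨⟨⟨integralCLM (Q : Measure X), rfl⟩, fun f hf => integral_nonneg hf⟩, by simp⟩
  · rintro ⟨⟨⟨L, rfl⟩, L_nonneg⟩, L_one⟩
    obtain ⟨μ, _, hμ⟩ := exists_measure_integral_eq (.mk₀ L L_nonneg)
    have μ_univ : μ.real Set.univ = 1 := by simpa using (hμ 1).trans L_one
    have : IsProbabilityMeasure μ :=
      ⟨by rwa [measureReal_def, ENNReal.toReal_eq_one_iff] at μ_univ⟩
    exact ⟨⟨μ, this⟩, funext hμ⟩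

theorem isClosed_range_integral [T2Space X] :
    IsClosed <| Set.range fun (Q : ProbabilityMeasure X) (f : C(X, ℝ)) =>
      ∫ x, f x ∂(Q : Measure X) := by
  rw [range_integral]
  refine (LinearMap.isClosed_range_coe _ _ _ |>.inter ?_).inter ?_
  · simp only [Set.ofPred_forall]
    exact isClosed_iInter fun f => isClosed_iInter fun _ => isClosed_le (by fun_prop) (by fun_prop)
  · exact isClosed_eq (by fun_prop) (by fun_prop)

instance [T2Space X] : CompactSpace (ProbabilityMeasure X) where
  isCompact_univ := by
    rw [isInducing_integral.isCompact_iff, Set.image_univ]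
    refine (isCompact_univ_pi fun f : C(X, ℝ) => isCompact_Icc (a := -‖f‖)
      (b := ‖f‖)).of_isClosed_subset isClosed_range_integral ?_
    rintro _ ⟨Q, rfl⟩ f -
    exact abs_le.1 (abs_integralEval_le f Q)

end WeakTopology

section Monomial

variable {X : Type*} [TopologicalSpace X] [MeasurableSpace X]

/-- The function `Q ↦ ∏ᵢ ∫ fᵢ dQ` on `ℳ(X)`. Its integral is a moment of a measure on `ℳ(X)`. -/
noncomputable def monomial {ι : Type*} [Fintype ι] (f : ι → C(X, ℝ)) :
    C(ProbabilityMeasure X, ℝ) :=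
  ∏ i, integralEval (f i)

theorem monomial_apply {ι : Type*} [Fintype ι] (f : ι → C(X, ℝ)) (Q : ProbabilityMeasure X) :
    monomial f Q = ∏ i, ∫ x, f i x ∂(Q : Measure X) := by
  simp [monomial, integralEval_apply]

theorem monomial_cons_one {k : ℕ} (f : Fin k → C(X, ℝ)) :
    monomial (Fin.cons 1 f : Fin (k + 1) → C(X, ℝ)) = monomial f := by
  ext Q
  simp [monomial_apply, Fin.prod_univ_succ]

theorem exists_eq_monomial_of_mem_closure {F : C(ProbabilityMeasure X, ℝ)}
    (hF : F ∈ Submonoid.closure (Set.range (integralEval (X := X)))) :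
    ∃ (k : ℕ) (f : Fin k → C(X, ℝ)), monomial f = F := by
  obtain ⟨l, hl, rfl⟩ := Submonoid.exists_list_of_mem_closure hF
  choose f hf using fun i : Fin l.length => hl _ (l.get_mem i)
  exact ⟨l.length, f, by simp_rw [monomial, hf, ← List.prod_ofFn, List.ofFn_get]⟩

variable [HasBaireSigma X]

theorem measurable_integralEval (f : C(X, ℝ)) : Measurable (integralEval f) :=
  (measurable_continuousMap f).stronglyMeasurable.integral_kernel
    (κ := ⟨_, measurable_subtype_coe⟩) |>.measurable

theorem measurable_monomial {ι : Type*} [Fintype ι] (f : ι → C(X, ℝ)) :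
    Measurable fun Q => monomial f Q := by
  simpa only [monomial, ContinuousMap.prod_apply] using
    Finset.measurable_fun_prod Finset.univ fun i _ => measurable_integralEval (f i)

theorem measurable_of_mem_span_monomial {F : C(ProbabilityMeasure X, ℝ)}
    (hF : F ∈ Submodule.span ℝ (⋃ k, Set.range (monomial (X := X) (ι := Fin k)))) :
    Measurable F := by
  induction hF using Submodule.span_induction with
  | mem _ h =>
    obtain ⟨k, f, rfl⟩ := Set.mem_iUnion.1 h
    exact measurable_monomial f
  | zero => exact measurable_const
  | add _ _ _ _ hF hG => exact hF.add hG
  | smul c _ _ hF => exact hF.const_smul c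

variable [CompactSpace X] [T2Space X]

theorem dense_span_monomial :
    Dense (Submodule.span ℝ (⋃ k, Set.range (monomial (X := X) (ι := Fin k))) :
      Set C(ProbabilityMeasure X, ℝ)) := by
  have separates : (Algebra.adjoin ℝ (Set.range (integralEval (X := X)))).SeparatesPoints := by
    intro Q R hQR
    obtain ⟨f, hf⟩ := Function.ne_iff.1 (injective_integral.ne hQR)
    exact ⟨_, ⟨_, Algebra.subset_adjoin ⟨f, rfl⟩, rfl⟩, hf⟩
  have dense_adjoin : Dense
      (Algebra.adjoin ℝ (Set.range (integralEval (X := X))) : Set C(ProbabilityMeasure X, ℝ)) :=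
    ContinuousMap.continuousMap_mem_subalgebra_closure_of_separatesPoints _ separates
  refine dense_adjoin.mono ?_
  rw [← Subalgebra.coe_toSubmodule, Algebra.adjoin_eq_span]
  refine Submodule.span_mono fun F hF => ?_
  obtain ⟨k, f, rfl⟩ := exists_eq_monomial_of_mem_closure hF
  exact Set.mem_iUnion.2 ⟨k, f, rfl⟩

theorem measurable_continuousMap_probabilityMeasure (F : C(ProbabilityMeasure X, ℝ)) :
    Measurable F := by
  obtain ⟨G, G_mem, hG⟩ := mem_closure_iff_seq_limit.1 (dense_span_monomial F)
  exact measurable_of_tendsto_metrizable (fun n => measurable_of_mem_span_monomial (G_mem n)) <|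
    tendsto_pi_nhds.2 fun Q => ((ContinuousEvalConst.continuous_eval_const Q).tendsto F).comp hG

instance : HasBaireSigma (ProbabilityMeasure X) where
  eq_baireSigma := by
    apply le_antisymm
    · exact (@measurable_measure_of_forall_integral_continuousMap X _ _ _ _ (baireSigma _)
        ProbabilityMeasure.toMeasure _ fun f => measurable_baireSigma (integralEval f)).comap_le
    · refine iSup_le fun F => ?_
      rw [← BorelSpace.measurable_eq (α := ℝ)]
      exact (measurable_continuousMap_probabilityMeasure F).comap_le

theorem ext_of_forall_integral_monomial_eq {μ ν : Measure (ProbabilityMeasure X)}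
    [IsFiniteMeasure μ] [IsFiniteMeasure ν]
    (h : ∀ (k : ℕ) (_ : 1 ≤ k) (f : Fin k → C(X, ℝ)),
      ∫ Q, monomial f Q ∂μ = ∫ Q, monomial f Q ∂ν) : μ = ν := by
  refine ext_of_integral_eqOn_of_dense_span dense_span_monomial fun F hF => ?_
  obtain ⟨k, f, rfl⟩ := Set.mem_iUnion.1 hF
  rw [← monomial_cons_one]
  exact h (k + 1) (by simp) _

end Monomial

section Mixture

variable {S ι : Type*} [MeasurableSpace S] [Fintype ι]

theorem measurable_pi_probabilityMeasure :
    Measurable fun Q : ProbabilityMeasure S => Measure.pi fun _ : ι => (Q : Measure S) := by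
  refine .measure_of_isPiSystem_of_isProbabilityMeasure generateFrom_pi.symm isPiSystem_pi ?_
  rintro _ ⟨s, hs, rfl⟩
  simp_rw [Measure.pi_pi]
  exact Finset.measurable_fun_prod _ fun i _ =>
    (Measure.measurable_coe (hs i (Set.mem_univ i))).comp measurable_subtype_coe

/-- The kernel from `ℳ(S)` to `S^ι` that draws an i.i.d. family from its argument. -/
noncomputable def iidKernel (S ι : Type*) [MeasurableSpace S] [Fintype ι] :
    Kernel (ProbabilityMeasure S) (ι → S) where
  toFun Q := Measure.pi fun _ => (Q : Measure S)
  measurable' := measurable_pi_probabilityMeasure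

instance : IsMarkovKernel (iidKernel S ι) where
  isProbabilityMeasure Q :=
    inferInstanceAs <| IsProbabilityMeasure (Measure.pi fun _ => (Q : Measure S))

/-- The mixture of i.i.d. measures `M_{k,μ}`, with an index type `ι` in place of `k`. -/
noncomputable def mixture (ι : Type*) [Fintype ι] (μ : Measure (ProbabilityMeasure S)) :
    Measure (ι → S) :=
  iidKernel S ι ∘ₘ μ

instance (μ : Measure (ProbabilityMeasure S)) [IsFiniteMeasure μ] :
    IsFiniteMeasure (mixture ι μ) :=
  inferInstanceAs <| IsFiniteMeasure (iidKernel S ι ∘ₘ μ)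

theorem mixture_apply (μ : Measure (ProbabilityMeasure S)) {A : Set (ι → S)}
    (hA : MeasurableSet A) :
    mixture ι μ A = ∫⁻ Q, Measure.pi (fun _ => (Q : Measure S)) A ∂μ :=
  Measure.bind_apply hA (iidKernel S ι).measurable.aemeasurable

theorem integral_mixture [TopologicalSpace S] [CompactSpace S] [HasBaireSigma S]
    (μ : Measure (ProbabilityMeasure S)) [IsFiniteMeasure μ] (f : ι → C(S, ℝ)) :
    ∫ x, ∏ i, f i (x i) ∂mixture ι μ = ∫ Q, monomial f Q ∂μ := by
  have integral_comp := Kernel.integral_comp (η := iidKernel S ι) (κ := Kernel.const Unit μ)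
    (a := ()) (integrable_prod_continuousMap _ f)
  rw [Kernel.comp_apply, Kernel.const_apply] at integral_comp
  rw [mixture, integral_comp]
  simp_rw [monomial_apply]
  exact integral_congr_ae <| ae_of_all _ fun Q => integral_fintype_prod_eq_prod fun i x => f i x

end Mixture

section Average

variable {ι κ : Type*} [Fintype ι] [Fintype κ] [DecidableEq κ]

theorem prod_expect (a : κ → ι → ℝ) : ∏ i, 𝔼 j, a i j = 𝔼 φ : κ → ι, ∏ i, a i (φ i) := by
  simp [Fintype.expect_eq_sum_div_card, Finset.prod_div_distrib, Finset.prod_univ_sum]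

open scoped Classical in
theorem expect_ite_injective :
    𝔼 φ : κ → ι, (if φ.Injective then 1 else 0 : ℝ) =
      (Fintype.card ι).descFactorial (Fintype.card κ) / Fintype.card ι ^ Fintype.card κ := by
  rw [Fintype.expect_eq_sum_div_card, Finset.sum_boole, ← Fintype.card_subtype,
    Fintype.card_congr (Equiv.subtypeInjectiveEquivEmbedding κ ι), Fintype.card_embedding_eq,
    Fintype.card_fun, Nat.cast_pow]

theorem abs_expect_sub_le [Nonempty ι] {a : (κ → ι) → ℝ} {c C : ℝ}
    (h_inj : ∀ φ, φ.Injective → a φ = c) (h_le : ∀ φ, |a φ - c| ≤ C) :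
    |𝔼 φ, a φ - c| ≤
      (1 - (Fintype.card ι).descFactorial (Fintype.card κ) / Fintype.card ι ^ Fintype.card κ) *
        C := by
  classical
  calc |𝔼 φ, a φ - c| = |𝔼 φ, (a φ - c)| := by
        rw [Finset.expect_sub_distrib, Fintype.expect_const]
    _ ≤ 𝔼 φ, |a φ - c| := Finset.abs_expect_le _ _
    _ ≤ 𝔼 φ : κ → ι, (1 - if φ.Injective then 1 else 0) * C := by
        refine Finset.expect_le_expect fun φ _ => ?_
        split_ifs with hφ
        · simp [h_inj φ hφ]
        · simpa using h_le φ
    _ = _ := by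
        rw [← Finset.expect_mul, Finset.expect_sub_distrib, Fintype.expect_const,
          expect_ite_injective]

theorem tendsto_descFactorial_div_pow (k : ℕ) :
    Tendsto (fun n : ℕ => (n.descFactorial k / n ^ k : ℝ)) atTop (𝓝 1) :=
  (Asymptotics.isEquivalent_iff_tendsto_one <| (eventually_ne_atTop 0).mono fun _ hn =>
    pow_ne_zero k (Nat.cast_ne_zero.2 hn)).1 (isEquivalent_descFactorial k)

end Average

section Empirical

variable {X ι : Type*} [MeasurableSpace X] [Fintype ι] [Nonempty ι]

/-- The empirical measure of a finite family of points. -/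
noncomputable def empiricalMeasure (x : ι → X) : ProbabilityMeasure X :=
  ⟨(Fintype.card ι : ℝ≥0∞)⁻¹ • ∑ j, Measure.dirac (x j),
    ⟨by simp [ENNReal.inv_mul_cancel]⟩⟩

theorem measurable_empiricalMeasure : Measurable (empiricalMeasure : (ι → X) → _) := by
  refine .subtype_mk <| Measure.measurable_of_measurable_coe _ fun s hs => ?_
  simp only [Measure.smul_apply, Measure.finsetSum_apply, smul_eq_mul]
  exact .const_mul (Finset.measurable_fun_sum _ fun j _ => (Measure.measurable_coe hs).comp
    (Measure.measurable_dirac.comp (measurable_pi_apply j))) _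

variable [TopologicalSpace X] [HasBaireSigma X]

theorem integral_empiricalMeasure (x : ι → X) (f : C(X, ℝ)) :
    ∫ y, f y ∂(empiricalMeasure x : Measure X) = 𝔼 j, f (x j) := by
  have hf := (measurable_continuousMap f).stronglyMeasurable
  rw [empiricalMeasure, ProbabilityMeasure.coe_mk, integral_smul_measure,
    integral_finsetSum_measure fun j _ => integrable_dirac' hf (by simp)]
  simp_rw [integral_dirac' _ _ hf]
  rw [Fintype.expect_eq_sum_div_card, ENNReal.toReal_inv, ENNReal.toReal_natCast, smul_eq_mul,
    inv_mul_eq_div]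

theorem integral_monomial_map_empiricalMeasure [CompactSpace X] {κ : Type*} [Fintype κ]
    [DecidableEq κ] (ν : Measure (ι → X)) [IsFiniteMeasure ν] (f : κ → C(X, ℝ)) :
    ∫ Q, monomial f Q ∂ν.map empiricalMeasure =
      𝔼 φ : κ → ι, ∫ y, ∏ i, f i (y i) ∂ν.map fun x i => x (φ i) := by
  have measurable_reindex (φ : κ → ι) : Measurable fun (x : ι → X) i => x (φ i) := by fun_prop
  have integrable_reindex (φ : κ → ι) : Integrable (fun x : ι → X => ∏ i, f i (x (φ i))) ν :=
    (integrable_prod_continuousMap (ν.map fun (x : ι → X) i => x (φ i)) f).comp_measurable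
      (measurable_reindex φ)
  calc ∫ Q, monomial f Q ∂ν.map empiricalMeasure
    _ = ∫ x, monomial f (empiricalMeasure x) ∂ν := integral_map
        measurable_empiricalMeasure.aemeasurable (measurable_monomial f).aestronglyMeasurable
    _ = ∫ x, 𝔼 φ : κ → ι, ∏ i, f i (x (φ i)) ∂ν := by
        simp_rw [monomial_apply, integral_empiricalMeasure, prod_expect]
    _ = 𝔼 φ : κ → ι, ∫ x, ∏ i, f i (x (φ i)) ∂ν := by
        simp_rw [Fintype.expect_eq_sum_div_card]
        rw [integral_div, integral_finsetSum _ fun φ _ => integrable_reindex φ]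
    _ = 𝔼 φ : κ → ι, ∫ y, ∏ i, f i (y i) ∂ν.map fun x i => x (φ i) :=
        Finset.expect_congr rfl fun φ _ => (integral_map (measurable_reindex φ).aemeasurable
          (measurable_prod_continuousMap f).aestronglyMeasurable).symm

theorem abs_integral_monomial_map_empiricalMeasure_sub_le [CompactSpace X] {κ : Type*} [Fintype κ]
    {ν : Measure (ι → X)} [IsProbabilityMeasure ν] {ρ : Measure (κ → X)} [IsProbabilityMeasure ρ]
    (h : ∀ φ : κ ↪ ι, ν.map (fun x i => x (φ i)) = ρ) (f : κ → C(X, ℝ)) :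
    |∫ Q, monomial f Q ∂ν.map empiricalMeasure - ∫ y, ∏ i, f i (y i) ∂ρ| ≤
      (1 - (Fintype.card ι).descFactorial (Fintype.card κ) / Fintype.card ι ^ Fintype.card κ) *
        (2 * ∏ i, ‖f i‖) := by
  classical
  have (φ : κ → ι) : IsProbabilityMeasure (ν.map fun x i => x (φ i)) :=
    Measure.isProbabilityMeasure_map (Measurable.aemeasurable (by fun_prop))
  rw [integral_monomial_map_empiricalMeasure]
  refine abs_expect_sub_le (fun φ hφ => by rw [← h ⟨φ, hφ⟩]; rfl) fun φ => ?_
  rw [two_mul]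
  exact (abs_sub _ _).trans (add_le_add (abs_integral_prod_continuousMap_le _ f)
    (abs_integral_prod_continuousMap_le _ f))

end Empirical

section Exchangeable

variable {S : Type*} [MeasurableSpace S]

/-- Exchangeability of the process with law `P`: the first `m` coordinates may be permuted by any
`σ` without changing the law. Leaving the later coordinates in place expresses this without
reference to the finite-dimensional laws. -/
def Exchangeable (P : Measure (ℕ → S)) : Prop :=
  ∀ (m : ℕ) (σ : Equiv.Perm (Fin m)),
    P.map (fun ω i => if h : i < m then ω (σ ⟨i, h⟩) else ω i) = P

/-- The law `P_k` of the first `k` coordinates under `P`. -/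
noncomputable def marginal (P : Measure (ℕ → S)) (k : ℕ) : Measure (Fin k → S) :=
  P.map fun ω i => ω i

instance (P : Measure (ℕ → S)) [IsProbabilityMeasure P] (k : ℕ) :
    IsProbabilityMeasure (marginal P k) :=
  Measure.isProbabilityMeasure_map (Measurable.aemeasurable (by fun_prop))

theorem isProbabilityMeasure_of_marginal_eq_mixture {P : Measure (ℕ → S)} [IsProbabilityMeasure P]
    {k : ℕ} {μ : Measure (ProbabilityMeasure S)}
    (h : marginal P k = mixture (Fin k) μ) : IsProbabilityMeasure μ where
  measure_univ := by simpa [mixture_apply] using (congrArg (· Set.univ) h).symm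

theorem Exchangeable.map_marginal {P : Measure (ℕ → S)} (hP : Exchangeable P) {k N : ℕ}
    (φ : Fin k ↪ Fin N) : (marginal P N).map (fun x i => x (φ i)) = marginal P k := by
  have hk : k ≤ N := by simpa using Fintype.card_le_of_embedding φ
  obtain ⟨σ, rfl⟩ := Equiv.Perm.exists_smul_eq_embedding (Fin.castLEEmb hk) φ
  have measurable_permute :
      Measurable fun (ω : ℕ → S) i => if h : i < N then ω (σ ⟨i, h⟩) else ω i := by
    refine measurable_pi_lambda _ fun i => ?_
    split_ifs <;> exact measurable_pi_apply _
  conv_rhs => rw [marginal, ← hP N σ, Measure.map_map (by fun_prop) measurable_permute]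
  rw [marginal, Measure.map_map (by fun_prop) (by fun_prop)]
  congr 1 with ω i
  simp [i.2.trans_le hk, Fin.castLE]

variable [TopologicalSpace S] [CompactSpace S] [HasBaireSigma S]
  {P : Measure (ℕ → S)} [IsProbabilityMeasure P]

theorem Exchangeable.tendsto_integral_monomial (hP : Exchangeable P) {k : ℕ}
    (f : Fin k → C(S, ℝ)) :
    Tendsto (fun n => ∫ Q, monomial f Q ∂(marginal P (n + 1)).map empiricalMeasure) atTop
      (𝓝 (∫ x, ∏ i, f i (x i) ∂marginal P k)) := by
  have error_tendsto : Tendsto (fun n : ℕ =>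
      (1 - (n + 1).descFactorial k / (n + 1 : ℕ) ^ k : ℝ) * (2 * ∏ i, ‖f i‖)) atTop (𝓝 0) := by
    simpa using (((tendsto_descFactorial_div_pow k).comp (tendsto_add_atTop_nat 1)).const_sub
      1).mul_const (2 * ∏ i, ‖f i‖)
  refine tendsto_iff_norm_sub_tendsto_zero.2 <|
    squeeze_zero (fun _ => norm_nonneg _) (fun n => ?_) error_tendsto
  simpa using abs_integral_monomial_map_empiricalMeasure_sub_le (ι := Fin (n + 1)) hP.map_marginal f

theorem Exchangeable.exists_integral_monomial_eq [T2Space S] (hP : Exchangeable P) :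
    ∃ μ : ProbabilityMeasure (ProbabilityMeasure S), ∀ (k : ℕ) (f : Fin k → C(S, ℝ)),
      ∫ Q, monomial f Q ∂(μ : Measure (ProbabilityMeasure S)) =
        ∫ x, ∏ i, f i (x i) ∂marginal P k := by
  let empiricalLaw (n : ℕ) : ProbabilityMeasure (ProbabilityMeasure S) :=
    ⟨(marginal P (n + 1)).map empiricalMeasure,
      Measure.isProbabilityMeasure_map measurable_empiricalMeasure.aemeasurable⟩
  obtain ⟨μ, -, hμ⟩ := isCompact_univ.ultrafilter_le_nhds
    ((hyperfilter ℕ).map empiricalLaw) (by simp)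
  refine ⟨μ, fun k f => tendsto_nhds_unique
    (((integralEval (monomial f)).continuous.tendsto μ).comp hμ) ?_⟩
  exact (hP.tendsto_integral_monomial f).mono_left Nat.hyperfilter_le_atTop

end Exchangeable

section Representation

variable {S : Type*} [TopologicalSpace S] [CompactSpace S] [MeasurableSpace S]
  [HasBaireSigma S] {P : Measure (ℕ → S)} [IsProbabilityMeasure P]

theorem marginal_eq_mixture_iff {k : ℕ} {μ : Measure (ProbabilityMeasure S)} [IsFiniteMeasure μ] :
    marginal P k = mixture (Fin k) μ ↔
      ∀ f : Fin k → C(S, ℝ), ∫ Q, monomial f Q ∂μ = ∫ x, ∏ i, f i (x i) ∂marginal P k := by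
  refine ⟨fun h f => by rw [h, integral_mixture], fun h => ?_⟩
  exact ext_of_forall_integral_prod_continuousMap_eq fun f => by rw [integral_mixture, h]

theorem Exchangeable.existsUnique_marginal_eq_mixture [T2Space S] (hP : Exchangeable P) :
    ∃! μ : Measure (ProbabilityMeasure S), ∀ k, 1 ≤ k → marginal P k = mixture (Fin k) μ := by
  obtain ⟨μ, hμ⟩ := hP.exists_integral_monomial_eq
  refine ⟨μ, fun k _ => marginal_eq_mixture_iff.2 (hμ k), fun ν hν => ?_⟩
  have := isProbabilityMeasure_of_marginal_eq_mixture (hν 1 le_rfl)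
  refine ext_of_forall_integral_monomial_eq fun k hk f => ?_
  rw [hμ k f, marginal_eq_mixture_iff.1 (hν k hk)]

theorem baireOnProbabilityMeasures_eq [T2Space S] :
    baireOnProbabilityMeasures S = ProbabilityMeasure.instMeasurableSpace :=
  (HasBaireSigma.eq_baireSigma (X := ProbabilityMeasure S)).symm

end Representation

end HewittSavage

/-- **The Hewitt–Savage representation theorem.** Let `S` be a compact Hausdorff space
equipped with its Baire σ-algebra. If `P` is the law of an exchangeable process
`{Xₙ ; n ≥ 1}` with values in `S`, then there exists a unique measure `μ` on the Baire
σ-algebra of `ℳ(S)` such that, for each `k ≥ 1`, the law `P_k` of `X₁,…,X_k` admits the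
representation `P_k = M_{k,μ}`, i.e. `P_k(A) = ∫_{ℳ(S)} Q^k(A) dμ(Q)` for all `A` in the
product σ-algebra on `S^k`. -/
theorem hewitt_savage
    {S : Type*} [TopologicalSpace S] [CompactSpace S] [T2Space S]
    [mS : MeasurableSpace S] (hmS : mS = baireSigma S)
    (P : Measure (ℕ → S)) [IsProbabilityMeasure P]
    (hexch : ∀ (m : ℕ) (σ : Equiv.Perm (Fin m)),
      P.map (fun ω i => if h : i < m then ω (σ ⟨i, h⟩) else ω i) = P) :
    ∃! μ : @Measure (ProbabilityMeasure S) (baireOnProbabilityMeasures S),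
      ∀ (k : ℕ) (_hk : 1 ≤ k) (A : Set (Fin k → S)), MeasurableSet A →
        P.map (fun ω (i : Fin k) => ω (i : ℕ)) A =
          @lintegral (ProbabilityMeasure S) (baireOnProbabilityMeasures S) μ
            (fun Q => Measure.pi (fun _ : Fin k => (Q : Measure S)) A) := by
  have : HewittSavage.HasBaireSigma S := ⟨hmS⟩
  rw [HewittSavage.baireOnProbabilityMeasures_eq]
  have hP : HewittSavage.Exchangeable P := hexch
  refine (existsUnique_congr fun μ => forall₂_congr fun k _ => ?_).1
    hP.existsUnique_marginal_eq_mixture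
  rw [Measure.ext_iff]
  exact forall₂_congr fun A hA => by rw [HewittSavage.mixture_apply μ hA]; rfl
end

section
/- Let H(ℓ,n,k;·) and B(ℓ,n,k;·) denote the multivariate hypergeometric and multinomial p.m.f.s of the colour counts when sampling k balls without and with replacement from an urn with n balls of c colours with composition ℓ, where every ℓ_j ≥ 1. Then, for any such ℓ and all 1 ≤ k ≤ n/2, D(H(ℓ,n,k;·) ‖ B(ℓ,n,k;·)) ≤ ((c−1)/2)( log(n/(n−k)) − k/(n−1) ) + (k(2n+1)/(12n(n−1)(n−k))) Σ_{j=1}^c (n/ℓ_j) + (1/360)( 1/(n−k)^3 − 1/n^3 ) Σ_{j=1}^c (n^3/ℓ_j^3). -/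
open MeasureTheory
open scoped ENNReal

open Classical in
/-- The relative entropy `D(P‖P') = Σ_{x : P(x)>0} P(x) log (P(x)/P'(x))` between two
probability mass functions on a discrete set (natural logarithm). -/
noncomputable def relEntPMF {α : Type*} (P P' : α → ℝ) : ℝ :=
  ∑' x, if 0 < P x then P x * Real.log (P x / P' x) else 0

/-- The multivariate hypergeometric p.m.f. `H(ℓ,n,k;s) = (∏ⱼ C(ℓⱼ,sⱼ)) / C(n,k)` of the
colour counts when sampling `k` balls *without replacement* from an urn of `n` balls of
`c` colours with composition `ℓ`; it is a p.m.f. on count vectors `s` with `Σⱼ sⱼ = k`. -/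
noncomputable def hyperPMF (c n k : ℕ) (ℓ : Fin c → ℕ)
    (s : {s : Fin c → ℕ // ∑ j, s j = k}) : ℝ :=
  ((∏ j, (ℓ j).choose (s.1 j) : ℕ) : ℝ) / (n.choose k : ℝ)

/-- The multinomial p.m.f. `B(ℓ,n,k;s) = (k choose s₁,…,s_c) ∏ⱼ (ℓⱼ/n)^{sⱼ}` of the colour
counts when sampling `k` balls *with replacement* from the same urn. -/
noncomputable def multinomPMF (c n k : ℕ) (ℓ : Fin c → ℕ)
    (s : {s : Fin c → ℕ // ∑ j, s j = k}) : ℝ :=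
  (Nat.multinomial Finset.univ s.1 : ℝ) * ∏ j, ((ℓ j : ℝ) / (n : ℝ)) ^ (s.1 j)

/-! Dividing the two mass functions gives
`H / B = ∏ⱼ ((ℓⱼ)_{sⱼ} / ℓⱼ ^ sⱼ) / ((n)_k / n ^ k)`, where `(a)_r` is a falling factorial, so the
relative entropy is governed by the expectations of `log (ℓⱼ - sⱼ)!` under hypergeometric sampling.
These are bounded below by a third-order Jensen inequality for `log Γ`: in Euler's product,
`log Γ` is minus a sum of logarithms, each of which lies below its cubic Taylor polynomial at the
mean. The hypergeometric moments of order at most three come from generating functions. Stirling's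
series, cut off after `1 / (12 x)` or after `-1 / (360 x³)`, then replaces the remaining values of
`log Γ`; its errors are monotone because its increments, less those of `log Γ`, are power series in
`(2 x + 1)⁻²` whose coefficients all have the same sign.
-/

section Stirling

open Filter Finset Real Set Topology

/-- Stirling's series for `log Γ(x + 1)` without the constant `log (2π) / 2`, cut off after the term
`1 / (12 x)`; for `x > 0` it overestimates. -/
noncomputable def stirlingUpper (x : ℝ) : ℝ :=
  x * log x - x + log x / 2 + 1 / (12 * x)

/-- Stirling's series for `log Γ(x + 1)` without the constant `log (2π) / 2`, cut off after the term
`-1 / (360 x³)`; for `x > 0` it underestimates. -/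
noncomputable def stirlingLower (x : ℝ) : ℝ :=
  stirlingUpper x - 1 / (360 * x ^ 3)

lemma hasSum_add_half_mul_log_add_one_sub_log {x : ℝ} (hx : 0 < x) :
    HasSum (fun k : ℕ ↦ 1 / (2 * k + 1) * ((1 / (2 * x + 1)) ^ 2) ^ k)
      ((x + 1 / 2) * (log (x + 1) - log x)) := by
  have hlog : log (x + 1) - log x = log (1 + x⁻¹) := by
    rw [← log_div (by positivity) hx.ne', add_div, div_self hx.ne', one_div]
  rw [hlog]
  refine ((hasSum_log_one_add_inv hx).mul_left (x + 1 / 2)).congr_fun fun k ↦ ?_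
  rw [pow_succ _ (2 * k), pow_mul]
  field_simp

lemma one_div_two_mul_add_one_sq_lt_one {x : ℝ} (hx : 0 < x) : (1 / (2 * x + 1)) ^ 2 < 1 := by
  rw [div_pow, one_pow, div_lt_one (by positivity)]
  nlinarith

lemma stirlingUpper_add_one_sub_le {x : ℝ} (hx : 0 < x) :
    stirlingUpper (x + 1) - stirlingUpper x ≤ log (x + 1) := by
  set w := (1 / (2 * x + 1)) ^ 2 with hw
  have hgeom : HasSum (fun k : ℕ ↦ 1 / 3 * w ^ k + if k = 0 then 2 / 3 else 0)
      (1 / 3 * (1 - w)⁻¹ + 2 / 3) :=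
    ((hasSum_geometric_of_lt_one (by positivity) (one_div_two_mul_add_one_sq_lt_one hx)).mul_left
      _).add (hasSum_ite_eq 0 _)
  have hterm (k : ℕ) : 1 / (2 * k + 1) * w ^ k ≤ 1 / 3 * w ^ k + if k = 0 then 2 / 3 else 0 := by
    rcases Nat.eq_zero_or_pos k with rfl | hk
    · norm_num
    · rw [if_neg hk.ne', add_zero]
      have : (1 : ℝ) ≤ k := by exact_mod_cast hk
      gcongr
      linarith
  have hle := hasSum_le hterm (hasSum_add_half_mul_log_add_one_sub_log hx) hgeom
  have hw' : 1 / 3 * (1 - w)⁻¹ + 2 / 3 = 1 + 1 / (12 * x) - 1 / (12 * (x + 1)) := by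
    have : (1 - w)⁻¹ = (2 * x + 1) ^ 2 / (4 * x * (x + 1)) := by
      rw [hw, inv_eq_iff_eq_inv, inv_div]
      field_simp
      ring
    rw [this]
    field_simp
    ring
  rw [hw'] at hle
  simp only [stirlingUpper]
  linarith

/-- With `w = (2x + 1)⁻²` one has `1 / (x (x + 1)) = 4w / (1 - w)`, so that the correction terms of
`stirlingLower`, like the logarithm, are power series in `w`. -/
lemma hasSum_stirlingLower_add_one_sub {x : ℝ} (hx : 0 < x) :
    HasSum (fun k : ℕ ↦ 8 * (k - 1) * (k - 2) * (k + 2) / (45 * (2 * k + 1)) *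
        ((1 / (2 * x + 1)) ^ 2) ^ k)
      (stirlingLower (x + 1) - stirlingLower x - log (x + 1) + 32 / 45) := by
  set w := (1 / (2 * x + 1)) ^ 2 with hw
  have hw1 : ‖w‖ < 1 := by
    rw [norm_of_nonneg (by positivity)]
    exact one_div_two_mul_add_one_sq_lt_one hx
  have hgeom (i : ℕ) := hasSum_choose_mul_geometric_of_norm_lt_one i hw1
  have hsub : 1 - w = 4 * x * (x + 1) / (2 * x + 1) ^ 2 := by
    rw [hw]
    field_simp
    ring
  have hval : stirlingLower (x + 1) - stirlingLower x - log (x + 1) + 32 / 45 =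
      (x + 1 / 2) * (log (x + 1) - log x) + 8 / 45 * (1 / (1 - w) ^ (2 + 1)) -
        2 / 5 * (1 / (1 - w) ^ (1 + 1)) - 1 / 15 * (1 / (1 - w) ^ (0 + 1)) := by
    have : 2 * x + 1 ≠ 0 := by positivity
    simp only [hsub, div_pow, one_div_div, stirlingLower, stirlingUpper]
    field_simp
    ring
  rw [hval]
  refine ((((hasSum_add_half_mul_log_add_one_sub_log hx).add
    ((hgeom 2).mul_left (8 / 45))).sub ((hgeom 1).mul_left (2 / 5))).sub
    ((hgeom 0).mul_left (1 / 15))).congr_fun fun k ↦ ?_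
  rw [← hw, Nat.cast_choose_two, Nat.choose_one_right, Nat.choose_zero_right]
  push_cast
  field_simp
  ring

lemma antitoneOn_stirlingLower_add_one_sub :
    AntitoneOn (fun x ↦ stirlingLower (x + 1) - stirlingLower x - log (x + 1)) (Ioi 0) := by
  intro x (hx : 0 < x) y (hy : 0 < y) hxy
  refine le_of_add_le_add_right (hasSum_le (fun k ↦ ?_) (hasSum_stirlingLower_add_one_sub hy)
    (hasSum_stirlingLower_add_one_sub hx))
  have hcoeff : (0 : ℝ) ≤ (k - 1) * (k - 2) := by
    rcases le_or_gt k 1 with hk | hk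
    · have : (k : ℝ) ≤ 1 := by exact_mod_cast hk
      nlinarith
    · have : (2 : ℝ) ≤ k := by exact_mod_cast hk
      nlinarith
  rw [mul_assoc 8]
  gcongr

lemma tendsto_stirlingLower_add_sub (a : ℝ) :
    Tendsto (fun t ↦ stirlingLower (t + a) - stirlingLower t - a * log t) atTop (𝓝 0) := by
  have hpow (b : ℝ) {p : ℕ} (hp : p ≠ 0) :
      Tendsto (fun t : ℝ ↦ ((t + b) ^ p)⁻¹) atTop (𝓝 0) :=
    tendsto_inv_atTop_zero.comp
      ((tendsto_pow_atTop hp).comp (tendsto_atTop_add_const_right _ b tendsto_id))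
  have hlog : Tendsto (fun t ↦ log (t + a) - log t) atTop (𝓝 0) :=
    tendsto_log_comp_add_sub_log a
  have hsum := (((((tendsto_mul_log_one_add_div_atTop a).add (hlog.const_mul (a + 1 / 2))).add
    (((hpow a one_ne_zero).sub (hpow 0 one_ne_zero)).const_mul (1 / 12))).sub
    (((hpow a three_ne_zero).sub (hpow 0 three_ne_zero)).const_mul (1 / 360)))).sub_const a
  simp only [sub_zero, mul_zero, add_zero, sub_self] at hsum
  refine hsum.congr' ?_
  filter_upwards [eventually_gt_atTop 0, eventually_gt_atTop (-a)] with t ht hta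
  have hta' : 0 < t + a := by linarith
  have hdiv : log (1 + a / t) = log (t + a) - log t := by
    rw [← log_div hta'.ne' ht.ne', add_div, div_self ht.ne']
  rw [hdiv, stirlingLower, stirlingLower, stirlingUpper, stirlingUpper]
  field_simp
  ring

/-- Euler's product expresses `log Γ(x + 1) - stirlingLower x`, up to a constant, as a series whose
terms are increments of `stirlingLower`, and these decrease in `x`. -/
lemma monotoneOn_stirlingLower_sub_log_Gamma :
    MonotoneOn (fun x ↦ stirlingLower x - log (Gamma (x + 1))) (Ioi 0) := by
  intro x (hx : 0 < x) y (hy : 0 < y) hxy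
  set δ : ℝ → ℝ := fun z ↦ stirlingLower (z + 1) - stirlingLower z - log (z + 1)
  have htelescope (z : ℝ) (n : ℕ) :
      ∑ m ∈ range (n + 1), (stirlingLower (z + m + 1) - stirlingLower (z + m)) =
        stirlingLower (n + (z + 1)) - stirlingLower z := by
    have h := Finset.sum_range_sub (fun m : ℕ ↦ stirlingLower (z + m)) (n + 1)
    push_cast at h
    simpa only [add_zero, add_assoc, add_left_comm] using h
  have hlim {z : ℝ} (hz : 0 < z) : Tendsto (fun n : ℕ ↦ stirlingLower z +
      ∑ m ∈ range (n + 1), δ (z + m) + (log n.factorial - stirlingLower n)) atTop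
      (𝓝 (log (Gamma (z + 1)))) := by
    have h := ((tendsto_stirlingLower_add_sub (z + 1)).comp tendsto_natCast_atTop_atTop).add
      (BohrMollerup.tendsto_log_gamma (x := z + 1) (by linarith))
    rw [zero_add] at h
    refine h.congr fun n ↦ ?_
    have hlog : ∑ m ∈ range (n + 1), log (z + m + 1) = ∑ m ∈ range (n + 1), log (z + 1 + m) :=
      sum_congr rfl fun m _ ↦ by rw [add_right_comm]
    simp only [δ, sum_sub_distrib (f := fun m : ℕ ↦ stirlingLower (z + m + 1) -
      stirlingLower (z + m)), htelescope, hlog, BohrMollerup.logGammaSeq, Function.comp_apply]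
    ring
  have hδ (m : ℕ) : δ (y + m) ≤ δ (x + m) :=
    antitoneOn_stirlingLower_add_one_sub (mem_Ioi.2 (by positivity)) (mem_Ioi.2 (by positivity))
      (by linarith)
  have hdiff := le_of_tendsto_of_tendsto' ((hlim hy).sub_const (stirlingLower y))
    ((hlim hx).sub_const (stirlingLower x)) fun n ↦ by
      linarith [sum_le_sum fun m (_ : m ∈ range (n + 1)) ↦ hδ m]
  change stirlingLower x - log (Gamma (x + 1)) ≤ stirlingLower y - log (Gamma (y + 1))
  linarith

lemma log_factorial_sub_stirlingUpper_le {a b : ℕ} (ha : 1 ≤ a) (hab : a ≤ b) :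
    log a.factorial - stirlingUpper a ≤ log b.factorial - stirlingUpper b := by
  induction b, hab using Nat.le_induction with
  | base => exact le_rfl
  | succ m ham ih =>
    have hstep := stirlingUpper_add_one_sub_le (x := m) (by exact_mod_cast ha.trans ham)
    have hfact : log (m + 1).factorial = log (m + 1) + log m.factorial := by
      rw [Nat.factorial_succ, Nat.cast_mul, log_mul (by positivity) (by positivity),
        Nat.cast_succ]
    rw [hfact, Nat.cast_succ]
    linarith

end Stirling

section Jensen

open Filter Finset Real Set Topology

lemma log_one_add_le_cubic {t : ℝ} (ht : -1 < t) : log (1 + t) ≤ t - t ^ 2 / 2 + t ^ 3 / 3 := by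
  set f : ℝ → ℝ := fun t ↦ t - t ^ 2 / 2 + t ^ 3 / 3 - log (1 + t)
  have hderiv {x : ℝ} (hx : -1 < x) : HasDerivAt f (x ^ 3 / (1 + x)) x := by
    have hx' : 1 + x ≠ 0 := by linarith
    refine ((((hasDerivAt_id' x).sub ((hasDerivAt_pow 2 x).div_const 2)).add
      ((hasDerivAt_pow 3 x).div_const 3)).sub
      (((hasDerivAt_id' x).const_add 1).log hx')).congr_deriv ?_
    push_cast
    field_simp
    ring
  have hmin : IsMinOn f (Ioi (-1)) 0 := by
    refine isMinOn_Ioi_of_deriv (hderiv (by norm_num)).continuousAt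
      (fun x hx ↦ (hderiv hx.1).differentiableAt.differentiableWithinAt)
      (fun x (hx : 0 < x) ↦ (hderiv (by linarith)).differentiableAt.differentiableWithinAt)
      (fun x hx ↦ ?_) (fun x (hx : 0 < x) ↦ ?_)
    · rw [(hderiv hx.1).deriv]
      exact div_nonpos_of_nonpos_of_nonneg ((Odd.pow_nonpos_iff (by decide)).2 hx.2.le)
        (by linarith [hx.1])
    · rw [(hderiv (by linarith)).deriv]
      positivity
  have hle : f 0 ≤ f t := hmin ht
  simp only [f, add_zero, log_one] at hle
  linarith

lemma log_le_taylor_three {a x : ℝ} (ha : 0 < a) (hx : 0 < x) :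
    log x ≤ log a + (x - a) / a - (x - a) ^ 2 / (2 * a ^ 2) + (x - a) ^ 3 / (3 * a ^ 3) := by
  have h := log_one_add_le_cubic (t := (x - a) / a)
    (by rw [lt_div_iff₀ ha]; linarith)
  rw [one_add_div ha.ne', add_sub_cancel, log_div hx.ne' ha.ne'] at h
  have : (x - a) / a - ((x - a) / a) ^ 2 / 2 + ((x - a) / a) ^ 3 / 3 =
      (x - a) / a - (x - a) ^ 2 / (2 * a ^ 2) + (x - a) ^ 3 / (3 * a ^ 3) := by
    field_simp
  linarith

lemma sum_mul_log_le {T : Type*} {s : Finset T} {w X : T → ℝ} {a : ℝ}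
    (hw : ∀ t ∈ s, 0 ≤ w t) (hw1 : ∑ t ∈ s, w t = 1) (hX : ∀ t ∈ s, 0 < X t) (ha : 0 < a)
    (hmean : ∑ t ∈ s, w t * X t = a) :
    ∑ t ∈ s, w t * log (X t) ≤ log a - (∑ t ∈ s, w t * (X t - a) ^ 2) / (2 * a ^ 2) +
      (∑ t ∈ s, w t * (X t - a) ^ 3) / (3 * a ^ 3) := by
  have hcentre : ∑ t ∈ s, w t * (X t - a) = 0 := by
    simp only [mul_sub, sum_sub_distrib, ← sum_mul, hmean, hw1, one_mul, sub_self]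
  have hterm (t : T) : w t * (log a + (X t - a) / a - (X t - a) ^ 2 / (2 * a ^ 2) +
      (X t - a) ^ 3 / (3 * a ^ 3)) = w t * log a + w t * (X t - a) / a -
        w t * (X t - a) ^ 2 / (2 * a ^ 2) + w t * (X t - a) ^ 3 / (3 * a ^ 3) := by
    ring
  calc ∑ t ∈ s, w t * log (X t)
      ≤ ∑ t ∈ s, w t * (log a + (X t - a) / a - (X t - a) ^ 2 / (2 * a ^ 2) +
          (X t - a) ^ 3 / (3 * a ^ 3)) :=
        sum_le_sum fun t ht ↦ mul_le_mul_of_nonneg_left (log_le_taylor_three ha (hX t ht)) (hw t ht)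
    _ = log a - (∑ t ∈ s, w t * (X t - a) ^ 2) / (2 * a ^ 2) +
          (∑ t ∈ s, w t * (X t - a) ^ 3) / (3 * a ^ 3) := by
        simp only [hterm, sum_add_distrib, sum_sub_distrib, ← sum_mul, ← sum_div, hw1, hcentre,
          one_mul, zero_div, add_zero]

lemma summable_one_div_add_natCast_pow {x : ℝ} (hx : 0 < x) {p : ℕ} (hp : 1 < p) :
    Summable fun m : ℕ ↦ 1 / (x + m) ^ p := by
  refine ((summable_one_div_nat_add_rpow x p).2 (by exact_mod_cast hp)).congr fun m ↦ ?_
  rw [rpow_natCast, abs_of_pos (by positivity), add_comm]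

lemma tendsto_one_div_add_natCast_pow (x : ℝ) {p : ℕ} (hp : p ≠ 0) :
    Tendsto (fun m : ℕ ↦ 1 / (x + m) ^ p) atTop (𝓝 0) :=
  tendsto_const_nhds.div_atTop ((tendsto_pow_atTop hp).comp
    (tendsto_atTop_add_const_left _ x tendsto_natCast_atTop_atTop))

lemma le_tsum_of_sub_succ_le {f u : ℕ → ℝ} (hf : Summable f) (hu : Tendsto u atTop (𝓝 0))
    (hfu : ∀ n, u n - u (n + 1) ≤ f n) : u 0 ≤ ∑' n, f n := by
  have hu' : Tendsto (fun N ↦ ∑ n ∈ range N, (u n - u (n + 1))) atTop (𝓝 (u 0)) := by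
    simpa only [sum_range_sub', sub_zero] using hu.const_sub (u 0)
  exact le_of_tendsto_of_tendsto' hu' hf.tendsto_sum_tsum_nat fun N ↦ sum_le_sum fun n _ ↦ hfu n

lemma tsum_le_of_le_sub_succ {f u : ℕ → ℝ} (hf : Summable f) (hu : Tendsto u atTop (𝓝 0))
    (hfu : ∀ n, f n ≤ u n - u (n + 1)) : ∑' n, f n ≤ u 0 := by
  have hneg := le_tsum_of_sub_succ_le hf.neg (by simpa only [neg_zero] using hu.neg)
    fun n ↦ by linarith [hfu n]
  rw [tsum_neg] at hneg
  linarith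

lemma one_div_sub_le_tsum_one_div_sq {x : ℝ} (hx : 0 < x) :
    1 / x - 1 / (2 * x ^ 2) ≤ ∑' m : ℕ, 1 / (x + 1 + m) ^ 2 := by
  have hu : Tendsto (fun m : ℕ ↦ 1 / (x + m) ^ 1 - 1 / 2 * (1 / (x + m) ^ 2)) atTop (𝓝 0) := by
    simpa only [mul_zero, sub_zero] using (tendsto_one_div_add_natCast_pow x one_ne_zero).sub
      ((tendsto_one_div_add_natCast_pow x two_ne_zero).const_mul (1 / 2))
  refine le_of_eq_of_le ?_ (le_tsum_of_sub_succ_le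
    (summable_one_div_add_natCast_pow (by positivity) one_lt_two) hu fun m ↦ ?_)
  · rw [Nat.cast_zero, add_zero]
    field_simp
  · obtain ⟨y, hy, hy0⟩ : ∃ y, y = x + m ∧ 0 < y := ⟨_, rfl, by positivity⟩
    rw [add_right_comm, Nat.cast_succ, ← add_assoc, ← hy, ← sub_nonneg]
    have : 1 / (y + 1) ^ 2 - (1 / y ^ 1 - 1 / 2 * (1 / y ^ 2) -
        (1 / (y + 1) ^ 1 - 1 / 2 * (1 / (y + 1) ^ 2))) = 1 / (2 * y ^ 2 * (y + 1) ^ 2) := by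
      field_simp
      ring
    rw [this]
    positivity

lemma tsum_one_div_cube_le {x : ℝ} (hx : 0 < x) :
    ∑' m : ℕ, 1 / (x + 1 + m) ^ 3 ≤ 1 / (2 * x ^ 2) := by
  have hu : Tendsto (fun m : ℕ ↦ 1 / 2 * (1 / (x + m) ^ 2)) atTop (𝓝 0) := by
    simpa only [mul_zero] using (tendsto_one_div_add_natCast_pow x two_ne_zero).const_mul (1 / 2)
  refine (tsum_le_of_le_sub_succ (summable_one_div_add_natCast_pow (by positivity) (by norm_num))
    hu fun m ↦ ?_).trans_eq ?_
  · obtain ⟨y, hy, hy0⟩ : ∃ y, y = x + m ∧ 0 < y := ⟨_, rfl, by positivity⟩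
    rw [add_right_comm, Nat.cast_succ, ← add_assoc, ← hy, ← sub_nonneg]
    have : 1 / 2 * (1 / y ^ 2) - 1 / 2 * (1 / (y + 1) ^ 2) - 1 / (y + 1) ^ 3 =
        (3 * y + 1) / (2 * y ^ 2 * (y + 1) ^ 3) := by
      field_simp
      ring
    rw [this]
    positivity
  · rw [Nat.cast_zero, add_zero]
    field_simp

lemma logGammaSeq_add_le_sum_mul_logGammaSeq {T : Type*} {s : Finset T} {w X : T → ℝ} {a : ℝ}
    (hw : ∀ t ∈ s, 0 ≤ w t) (hw1 : ∑ t ∈ s, w t = 1) (hX : ∀ t ∈ s, 0 < X t) (ha : 0 < a)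
    (hmean : ∑ t ∈ s, w t * X t = a) (n : ℕ) :
    BohrMollerup.logGammaSeq a n +
        1 / 2 * (∑ m ∈ range (n + 1), 1 / (a + m) ^ 2) * ∑ t ∈ s, w t * (X t - a) ^ 2 -
        1 / 3 * (∑ m ∈ range (n + 1), 1 / (a + m) ^ 3) * ∑ t ∈ s, w t * (X t - a) ^ 3 ≤
      ∑ t ∈ s, w t * BohrMollerup.logGammaSeq (X t) n := by
  set V := ∑ t ∈ s, w t * (X t - a) ^ 2 with hV
  set K := ∑ t ∈ s, w t * (X t - a) ^ 3 with hK
  have hshift (m : ℕ) : ∑ t ∈ s, w t * log (X t + m) ≤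
      log (a + m) - 1 / 2 * (1 / (a + m) ^ 2) * V + 1 / 3 * (1 / (a + m) ^ 3) * K := by
    have hmean' : ∑ t ∈ s, w t * (X t + m) = a + m := by
      simp only [mul_add, sum_add_distrib, hmean, ← sum_mul, hw1, one_mul]
    have h := sum_mul_log_le hw hw1 (fun t ht ↦ add_pos_of_pos_of_nonneg (hX t ht) m.cast_nonneg)
      (by positivity) hmean'
    simp only [add_sub_add_right_eq_sub, ← hV, ← hK] at h
    exact h.trans_eq (by field_simp)
  have hsum : ∑ t ∈ s, w t * BohrMollerup.logGammaSeq (X t) n = a * log n + log n.factorial -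
      ∑ m ∈ range (n + 1), ∑ t ∈ s, w t * log (X t + m) := by
    simp only [BohrMollerup.logGammaSeq, mul_sub, mul_add, sum_sub_distrib, sum_add_distrib,
      ← mul_assoc, ← sum_mul, hmean, hw1, one_mul, mul_sum]
    rw [sum_comm]
  have hle := sum_le_sum fun m (_ : m ∈ range (n + 1)) ↦ hshift m
  simp only [sum_add_distrib, sum_sub_distrib, ← mul_sum, ← sum_mul] at hle
  rw [hsum, BohrMollerup.logGammaSeq]
  linarith

lemma log_Gamma_add_le_sum_mul_log_Gamma {T : Type*} {s : Finset T} {w X : T → ℝ} {a : ℝ}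
    (hw : ∀ t ∈ s, 0 ≤ w t) (hw1 : ∑ t ∈ s, w t = 1) (hX : ∀ t ∈ s, 0 < X t) (ha : 0 < a)
    (hmean : ∑ t ∈ s, w t * X t = a) :
    log (Gamma a) + 1 / 2 * (∑' m : ℕ, 1 / (a + m) ^ 2) * ∑ t ∈ s, w t * (X t - a) ^ 2 -
        1 / 3 * (∑' m : ℕ, 1 / (a + m) ^ 3) * ∑ t ∈ s, w t * (X t - a) ^ 3 ≤
      ∑ t ∈ s, w t * log (Gamma (X t)) := by
  have hpow {p : ℕ} (hp : 1 < p) : Tendsto (fun n ↦ ∑ m ∈ range (n + 1), 1 / (a + m) ^ p) atTop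
      (𝓝 (∑' m : ℕ, 1 / (a + m) ^ p)) :=
    ((summable_one_div_add_natCast_pow ha hp).tendsto_sum_tsum_nat).comp (tendsto_add_atTop_nat 1)
  exact le_of_tendsto_of_tendsto'
    (((BohrMollerup.tendsto_log_gamma ha).add
      (((hpow (p := 2) (by norm_num)).const_mul _).mul_const _)).sub
      (((hpow (p := 3) (by norm_num)).const_mul _).mul_const _))
    (tendsto_finsetSum _ fun t ht ↦ (BohrMollerup.tendsto_log_gamma (hX t ht)).const_mul _)
    (logGammaSeq_add_le_sum_mul_logGammaSeq hw hw1 hX ha hmean)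

lemma log_factorial_sub_sum_mul_log_factorial_le {T : Type*} {s : Finset T} {w : T → ℝ}
    {X : T → ℕ} {a : ℕ} {μ K : ℝ} (hw : ∀ t ∈ s, 0 ≤ w t) (hw1 : ∑ t ∈ s, w t = 1) (hμ : 0 < μ)
    (hμa : μ ≤ a) (hmean : ∑ t ∈ s, w t * X t = μ) (hK : ∑ t ∈ s, w t * (X t - μ) ^ 3 ≤ K)
    (hK0 : 0 ≤ K) :
    log a.factorial - ∑ t ∈ s, w t * log (X t).factorial ≤
      stirlingLower a - stirlingLower μ -
        1 / 2 * (1 / μ - 1 / (2 * μ ^ 2)) * ∑ t ∈ s, w t * (X t - μ) ^ 2 + K / (6 * μ ^ 2) := by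
  have hmean' : ∑ t ∈ s, w t * (X t + 1 : ℝ) = μ + 1 := by
    simp only [mul_add, sum_add_distrib, hmean, mul_one, hw1]
  have hjensen := log_Gamma_add_le_sum_mul_log_Gamma hw hw1 (fun t _ ↦ by positivity)
    (by positivity) hmean'
  simp only [add_sub_add_right_eq_sub, Gamma_nat_eq_factorial] at hjensen
  have hstirling : stirlingLower μ - log (Gamma (μ + 1)) ≤ stirlingLower a - log a.factorial := by
    rw [← Gamma_nat_eq_factorial]
    exact monotoneOn_stirlingLower_sub_log_Gamma hμ (hμ.trans_le hμa) hμa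
  have hsq := mul_le_mul_of_nonneg_right (one_div_sub_le_tsum_one_div_sq hμ)
    (sum_nonneg fun t ht ↦ mul_nonneg (hw t ht) (sq_nonneg (X t - μ)))
  have hcube : (∑' m : ℕ, 1 / (μ + 1 + m) ^ 3) * ∑ t ∈ s, w t * (X t - μ) ^ 3 ≤
      1 / (2 * μ ^ 2) * K :=
    (mul_le_mul_of_nonneg_left hK (tsum_nonneg fun m ↦ by positivity)).trans
      (mul_le_mul_of_nonneg_right (tsum_one_div_cube_le hμ) hK0)
  have hK_div : K / (6 * μ ^ 2) = 1 / 3 * (1 / (2 * μ ^ 2) * K) := by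
    ring
  rw [hK_div]
  linarith

end Jensen

section Hypergeometric

open Finset

variable {ι : Type*} [Fintype ι]

/-- The hypergeometric p.m.f. `hyperPMF` as a function on all count vectors, for any
finite type of colours. -/
noncomputable def hyperWeight (n k : ℕ) (ℓ s : ι → ℕ) : ℝ :=
  ((∏ i, (ℓ i).choose (s i) : ℕ) : ℝ) / (n.choose k : ℝ)

lemma hyperWeight_nonneg (n k : ℕ) (ℓ s : ι → ℕ) :
    0 ≤ hyperWeight n k ℓ s := by
  unfold hyperWeight
  positivity

lemma le_of_hyperWeight_ne_zero {n k : ℕ} {ℓ s : ι → ℕ}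
    (hs : hyperWeight n k ℓ s ≠ 0) (i : ι) : s i ≤ ℓ i := by
  contrapose! hs
  rw [hyperWeight, prod_eq_zero (mem_univ i) (Nat.choose_eq_zero_of_lt hs), Nat.cast_zero, zero_div]

variable [DecidableEq ι]

lemma sum_piAntidiag_prod_coeff {R : Type*} [CommSemiring R] (f : ι → PowerSeries R) (k : ℕ) :
    ∑ s ∈ piAntidiag univ k, ∏ i, PowerSeries.coeff (s i) (f i) =
      PowerSeries.coeff k (∏ i, f i) := by
  rw [PowerSeries.coeff_prod]
  refine sum_bij' (fun s _ ↦ Finsupp.equivFunOnFinite.symm s) (fun s _ ↦ ⇑s) ?_ ?_ ?_ ?_ ?_ <;>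
    simp

lemma coeff_one_add_X_pow (m k : ℕ) :
    PowerSeries.coeff k ((1 + PowerSeries.X : PowerSeries ℕ) ^ m) = m.choose k := by
  have h := Polynomial.coeff_one_add_X_pow ℕ m k
  rw [← Polynomial.coeff_coe] at h
  simpa only [Polynomial.coe_pow, Polynomial.coe_add, Polynomial.coe_one, Polynomial.coe_X,
    Nat.cast_id] using h

lemma choose_mul_choose_eq_coeff (m s r : ℕ) :
    m.choose s * s.choose r = m.choose r *
      PowerSeries.coeff s (PowerSeries.X ^ r * (1 + PowerSeries.X : PowerSeries ℕ) ^ (m - r)) := by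
  rw [PowerSeries.coeff_X_pow_mul']
  split_ifs with hrs
  · rw [coeff_one_add_X_pow, Nat.choose_mul hrs]
  · rw [Nat.choose_eq_zero_of_lt (not_le.1 hrs), mul_zero, mul_zero]

lemma sum_piAntidiag_prod_choose (ℓ : ι → ℕ) (k : ℕ) :
    ∑ s ∈ piAntidiag univ k, ∏ i, (ℓ i).choose (s i) = (∑ i, ℓ i).choose k := by
  simp only [← coeff_one_add_X_pow, sum_piAntidiag_prod_coeff, prod_pow_eq_pow_sum]

/-- Distinguishing `r` of the drawn balls of colour `j` replaces the factor `(1 + X) ^ ℓ j` of the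
generating function by `C(ℓ j, r) X ^ r (1 + X) ^ (ℓ j - r)`. -/
lemma sum_piAntidiag_prod_choose_mul_choose (ℓ : ι → ℕ) (k : ℕ) (j : ι) (r : ℕ) :
    (∑ s ∈ piAntidiag univ k, (∏ i, (ℓ i).choose (s i)) * (s j).choose r) *
        (∑ i, ℓ i).choose r =
      (ℓ j).choose r * ((∑ i, ℓ i).choose k * k.choose r) := by
  set Q : PowerSeries ℕ := 1 + PowerSeries.X
  set G : ι → PowerSeries ℕ :=
    Function.update (fun i ↦ Q ^ ℓ i) j (PowerSeries.X ^ r * Q ^ (ℓ j - r)) with hG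
  have hfactor (s : ι → ℕ) : (∏ i, (ℓ i).choose (s i)) * (s j).choose r =
      (ℓ j).choose r * ∏ i, PowerSeries.coeff (s i) (G i) := by
    have hupdate (i : ι) := Function.apply_update (fun i ↦ PowerSeries.coeff (R := ℕ) (s i))
      (fun i ↦ Q ^ ℓ i) j (PowerSeries.X ^ r * Q ^ (ℓ j - r)) i
    rw [hG, prod_congr rfl fun i _ ↦ hupdate i, prod_update_of_mem (mem_univ j), ← mul_assoc,
      ← choose_mul_choose_eq_coeff, ← mul_prod_erase univ _ (mem_univ j),
      sdiff_singleton_eq_erase, mul_right_comm]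
    simp only [Q, coeff_one_add_X_pow]
  have hprod (hr : r ≤ ℓ j) : ∏ i, G i = PowerSeries.X ^ r * Q ^ (∑ i, ℓ i - r) := by
    have hexp : ∑ i, ℓ i - r = ℓ j - r + ∑ i ∈ univ.erase j, ℓ i := by
      rw [← add_sum_erase univ ℓ (mem_univ j), Nat.sub_add_comm hr]
    rw [hG, prod_update_of_mem (mem_univ j), sdiff_singleton_eq_erase, prod_pow_eq_pow_sum,
      mul_assoc, ← pow_add, hexp]
  simp only [hfactor, ← mul_sum, sum_piAntidiag_prod_coeff]
  rcases le_or_gt r (ℓ j) with hr | hr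
  · rw [hprod hr, choose_mul_choose_eq_coeff, mul_assoc, mul_comm (PowerSeries.coeff k _)]
  · rw [Nat.choose_eq_zero_of_lt hr, zero_mul, zero_mul, zero_mul]

lemma cast_choose_three (a : ℕ) : (a.choose 3 : ℝ) = a * (a - 1) * (a - 2) / 6 := by
  rw [Nat.cast_choose_eq_descPochhammer_div]
  simp [descPochhammer_succ_eval, Nat.factorial]

/-- The colour counts that can occur when `k` balls are drawn without replacement from an urn with
composition `ℓ`; this is the support of `hyperWeight`. -/
def draws (k : ℕ) (ℓ : ι → ℕ) : Finset (ι → ℕ) :=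
  {s ∈ piAntidiag univ k | ∀ i, s i ≤ ℓ i}

lemma mem_draws {k : ℕ} {ℓ s : ι → ℕ} : s ∈ draws k ℓ ↔ ∑ i, s i = k ∧ ∀ i, s i ≤ ℓ i := by
  simp [draws]

lemma sum_draws_hyperWeight_mul_eq_sum_piAntidiag (n k : ℕ) (ℓ : ι → ℕ) (g : (ι → ℕ) → ℝ) :
    ∑ s ∈ draws k ℓ, hyperWeight n k ℓ s * g s =
      ∑ s ∈ piAntidiag univ k, hyperWeight n k ℓ s * g s :=
  sum_filter_of_ne fun _ _ hs ↦ le_of_hyperWeight_ne_zero (left_ne_zero_of_mul hs)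

lemma sum_draws_hyperWeight_mul (n k : ℕ) (ℓ : ι → ℕ) (g : (ι → ℕ) → ℝ) :
    ∑ s ∈ draws k ℓ, hyperWeight n k ℓ s * g s =
      (∑ s ∈ piAntidiag univ k, ((∏ i, (ℓ i).choose (s i) : ℕ) : ℝ) * g s) / n.choose k := by
  rw [sum_draws_hyperWeight_mul_eq_sum_piAntidiag, sum_div]
  exact sum_congr rfl fun s _ ↦ div_mul_eq_mul_div _ _ _

section Moments

variable {ℓ : ι → ℕ} {n k : ℕ} (hℓ : ∑ i, ℓ i = n) (hkn : k ≤ n)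
include hℓ hkn

lemma sum_hyperWeight : ∑ s ∈ draws k ℓ, hyperWeight n k ℓ s = 1 := by
  have h := sum_draws_hyperWeight_mul n k ℓ fun _ ↦ 1
  simp only [mul_one] at h
  rw [h, ← Nat.cast_sum, sum_piAntidiag_prod_choose, hℓ]
  exact div_self (Nat.cast_ne_zero.2 (Nat.choose_pos hkn).ne')

lemma sum_hyperWeight_mul_choose (j : ι) (r : ℕ) :
    ∑ s ∈ draws k ℓ, hyperWeight n k ℓ s * (s j).choose r =
      (ℓ j).choose r * k.choose r / n.choose r := by
  rcases le_or_gt r n with hr | hr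
  · have hk : (n.choose k : ℝ) ≠ 0 := Nat.cast_ne_zero.2 (Nat.choose_pos hkn).ne'
    have hr' : (n.choose r : ℝ) ≠ 0 := Nat.cast_ne_zero.2 (Nat.choose_pos hr).ne'
    have h : (∑ s ∈ piAntidiag univ k, ((∏ i, (ℓ i).choose (s i) : ℕ) : ℝ) * (s j).choose r) *
        n.choose r = (ℓ j).choose r * (n.choose k * k.choose r) := by
      exact_mod_cast hℓ ▸ sum_piAntidiag_prod_choose_mul_choose ℓ k j r
    rw [sum_draws_hyperWeight_mul, div_eq_div_iff hk hr', h]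
    ring
  · have hj : ℓ j ≤ n := hℓ ▸ single_le_sum (fun _ _ ↦ Nat.zero_le _) (mem_univ j)
    rw [Nat.choose_eq_zero_of_lt (hkn.trans_lt hr), Nat.cast_zero, mul_zero, zero_div]
    refine sum_eq_zero fun s hs ↦ ?_
    rw [Nat.choose_eq_zero_of_lt ((((mem_draws.1 hs).2 j).trans hj).trans_lt hr), Nat.cast_zero,
      mul_zero]

lemma sum_hyperWeight_mul_apply (j : ι) :
    ∑ s ∈ draws k ℓ, hyperWeight n k ℓ s * s j = ℓ j * k / n := by
  simpa only [Nat.choose_one_right] using sum_hyperWeight_mul_choose hℓ hkn j 1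

lemma sum_hyperWeight_mul_sub_sq (hn : 2 ≤ n) (j : ι) :
    ∑ s ∈ draws k ℓ, hyperWeight n k ℓ s * (s j - ℓ j * k / n : ℝ) ^ 2 =
      ℓ j * k * (n - ℓ j) * (n - k) / (n ^ 2 * (n - 1)) := by
  have hn0 : (n : ℝ) ≠ 0 := by positivity
  have hn1 : (n - 1 : ℝ) ≠ 0 := by
    have : (2 : ℝ) ≤ n := by exact_mod_cast hn
    linarith
  set m : ℝ := ℓ j * k / n with hm
  have hterm (s : ι → ℕ) : hyperWeight n k ℓ s * (s j - m) ^ 2 =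
      2 * (hyperWeight n k ℓ s * (s j).choose 2) + (1 - 2 * m) * (hyperWeight n k ℓ s * s j) +
        m ^ 2 * hyperWeight n k ℓ s := by
    rw [Nat.cast_choose_two]
    ring
  simp only [hterm, sum_add_distrib, ← mul_sum, sum_hyperWeight_mul_choose hℓ hkn,
    sum_hyperWeight_mul_apply hℓ hkn, sum_hyperWeight hℓ hkn]
  simp only [hm, Nat.cast_choose_two]
  field_simp
  ring

/-- For `n = 2` the right-hand side is a division by `0`, and the third moment vanishes as well. -/
lemma sum_hyperWeight_mul_sub_cube (hn : 2 ≤ n) (j : ι) :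
    ∑ s ∈ draws k ℓ, hyperWeight n k ℓ s * (s j - ℓ j * k / n : ℝ) ^ 3 =
      ℓ j * k * (n - ℓ j) * (n - k) * (n - 2 * ℓ j) * (n - 2 * k) /
        (n ^ 3 * (n - 1) * (n - 2)) := by
  set m : ℝ := ℓ j * k / n with hm
  have hterm (s : ι → ℕ) : hyperWeight n k ℓ s * (s j - m) ^ 3 =
      6 * (hyperWeight n k ℓ s * (s j).choose 3) +
        6 * (1 - m) * (hyperWeight n k ℓ s * (s j).choose 2) +
        (1 - 3 * m + 3 * m ^ 2) * (hyperWeight n k ℓ s * s j) -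
        m ^ 3 * hyperWeight n k ℓ s := by
    rw [Nat.cast_choose_two, cast_choose_three]
    ring
  simp only [hterm, sum_add_distrib, sum_sub_distrib, ← mul_sum, sum_hyperWeight_mul_choose hℓ hkn,
    sum_hyperWeight_mul_apply hℓ hkn, sum_hyperWeight hℓ hkn]
  simp only [hm, Nat.cast_choose_two, cast_choose_three]
  rcases hn.eq_or_lt with rfl | hn
  · have hj : ℓ j ≤ 2 := hℓ ▸ single_le_sum (fun _ _ ↦ Nat.zero_le _) (mem_univ j)
    generalize ℓ j = a at hj ⊢
    interval_cases a <;> interval_cases k <;> norm_num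
  · have hn3 : (3 : ℝ) ≤ n := by exact_mod_cast hn
    have hn0 : (n : ℝ) ≠ 0 := by linarith
    have hn1 : (n - 1 : ℝ) ≠ 0 := by linarith
    have hn2 : (n - 2 : ℝ) ≠ 0 := by linarith
    field_simp
    ring

end Moments

end Hypergeometric

section FallingRatio

open Finset Real

/-- The probability that `r` draws with replacement from an urn of `a` balls are distinct. -/
noncomputable def fallingRatio (a r : ℕ) : ℝ :=
  a.descFactorial r / (a : ℝ) ^ r

lemma natCast_pow_pos_of_le {a r : ℕ} (h : r ≤ a) : (0 : ℝ) < (a : ℝ) ^ r := by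
  rcases r.eq_zero_or_pos with rfl | hr
  · simp
  · have : 0 < a := hr.trans_le h
    positivity

lemma fallingRatio_pos {a r : ℕ} (h : r ≤ a) : 0 < fallingRatio a r :=
  div_pos (Nat.cast_pos.2 (Nat.descFactorial_pos.2 h)) (natCast_pow_pos_of_le h)

lemma log_fallingRatio {a r : ℕ} (h : r ≤ a) :
    log (fallingRatio a r) = log a.factorial - log (a - r).factorial - r * log a := by
  have hdesc : (a.descFactorial r : ℝ) ≠ 0 := Nat.cast_ne_zero.2 (Nat.descFactorial_pos.2 h).ne'
  rw [fallingRatio, log_div hdesc (natCast_pow_pos_of_le h).ne', log_pow,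
    ← Nat.factorial_mul_descFactorial h, Nat.cast_mul, log_mul (by positivity) hdesc]
  ring

lemma le_log_fallingRatio {n k : ℕ} (hkn : k < n) :
    (n - k + 1 / 2) * log (n / (n - k)) - k - k / (12 * n * (n - k)) ≤
      log (fallingRatio n k) := by
  have hn : (0 : ℝ) < n := by exact_mod_cast (Nat.zero_le k).trans_lt hkn
  have hnk : (0 : ℝ) < n - k := sub_pos.2 (Nat.cast_lt.2 hkn)
  have hfac := log_factorial_sub_stirlingUpper_le (Nat.sub_pos_of_lt hkn) (Nat.sub_le n k)
  have hdiff : stirlingUpper n - stirlingUpper (n - k) - k * log n =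
      (n - k + 1 / 2) * log (n / (n - k)) - k - k / (12 * n * (n - k)) := by
    rw [log_div hn.ne' hnk.ne', stirlingUpper, stirlingUpper]
    field_simp
    ring
  rw [log_fallingRatio hkn.le]
  rw [Nat.cast_sub hkn.le] at hfac
  linarith

end FallingRatio

section RelativeEntropy

open Finset Real

lemma hyperWeight_div_multinomial {ι : Type*} [Fintype ι] {n k : ℕ} {ℓ s : ι → ℕ}
    (hs : ∑ i, s i = k) :
    hyperWeight n k ℓ s / (Nat.multinomial univ s * ∏ i, ((ℓ i : ℝ) / n) ^ s i) =
      (∏ i, fallingRatio (ℓ i) (s i)) / fallingRatio n k := by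
  have hspec : (∏ i, ((s i).factorial : ℝ)) * Nat.multinomial univ s = k.factorial := by
    exact_mod_cast hs ▸ Nat.multinomial_spec univ s
  have hmul : (Nat.multinomial univ s : ℝ) ≠ 0 :=
    Nat.cast_ne_zero.2 (Nat.multinomial_pos univ s).ne'
  have hfac : ∏ i, ((s i).factorial : ℝ) ≠ 0 := prod_ne_zero_iff.2 fun i _ ↦ by positivity
  simp only [hyperWeight, fallingRatio, Nat.descFactorial_eq_factorial_mul_choose, div_pow,
    prod_div_distrib, prod_pow_eq_pow_sum, hs, Nat.cast_mul, Nat.cast_prod, prod_mul_distrib,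
    ← hspec]
  field_simp

lemma relEntPMF_eq_sum_draws (c n k : ℕ) (ℓ : Fin c → ℕ)
    (P' : {s : Fin c → ℕ // ∑ j, s j = k} → ℝ) (g : (Fin c → ℕ) → ℝ)
    (hg : ∀ s, 0 < hyperPMF c n k ℓ s → log (hyperPMF c n k ℓ s / P' s) = g s) :
    relEntPMF (hyperPMF c n k ℓ) P' = ∑ s ∈ draws k ℓ, hyperWeight n k ℓ s * g s := by
  have hterm (s : {s : Fin c → ℕ // ∑ j, s j = k}) :
      (if 0 < hyperPMF c n k ℓ s then hyperPMF c n k ℓ s * log (hyperPMF c n k ℓ s / P' s)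
        else 0) = hyperWeight n k ℓ s * g s := by
    split_ifs with hs
    · rw [hg s hs, hyperPMF, hyperWeight]
    · have hzero : hyperWeight n k ℓ s = 0 :=
        le_antisymm (not_lt.1 hs) (hyperWeight_nonneg n k ℓ s)
      rw [hzero, zero_mul]
  rw [sum_draws_hyperWeight_mul_eq_sum_piAntidiag, ← Finset.tsum_subtype, relEntPMF,
    tsum_congr hterm]
  exact (Equiv.subtypeEquivRight fun s ↦ by simp).tsum_eq
    fun s : {s // s ∈ piAntidiag (univ : Finset (Fin c)) k} ↦ hyperWeight n k ℓ s * g s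

lemma relEntPMF_hyperPMF_multinomPMF {c n k : ℕ} {ℓ : Fin c → ℕ} (hℓ : ∑ j, ℓ j = n)
    (hkn : k ≤ n) :
    relEntPMF (hyperPMF c n k ℓ) (multinomPMF c n k ℓ) =
      ∑ j, ∑ s ∈ draws k ℓ, hyperWeight n k ℓ s * log (fallingRatio (ℓ j) (s j)) -
        log (fallingRatio n k) := by
  rw [relEntPMF_eq_sum_draws c n k ℓ _ fun s ↦
    ∑ j, log (fallingRatio (ℓ j) (s j)) - log (fallingRatio n k)]
  · simp only [mul_sub, mul_sum, sum_sub_distrib, ← sum_mul, sum_hyperWeight hℓ hkn, one_mul]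
    rw [sum_comm]
  · intro s hs
    have hpos (j : Fin c) : 0 < fallingRatio (ℓ j) (s.1 j) :=
      fallingRatio_pos (le_of_hyperWeight_ne_zero hs.ne' j)
    rw [← log_prod fun j _ ↦ (hpos j).ne',
      ← log_div (prod_pos fun j _ ↦ hpos j).ne' (fallingRatio_pos hkn).ne',
      ← hyperWeight_div_multinomial s.2, hyperPMF, hyperWeight, multinomPMF]

end RelativeEntropy

section ColourBound

open Finset Real

variable {ι : Type*} [Fintype ι] [DecidableEq ι] {ℓ : ι → ℕ} {n k : ℕ}

lemma neg_sum_hyperWeight_mul_sub_cube_le (hℓ : ∑ i, ℓ i = n) (hk : 1 ≤ k) (hkn : 2 * k ≤ n)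
    (j : ι) :
    -∑ s ∈ draws k ℓ, hyperWeight n k ℓ s * (s j - ℓ j * k / n : ℝ) ^ 3 ≤
      ℓ j ^ 2 * k * (n - k) / (2 * n ^ 2 * (n - 1)) := by
  have hk' : (1 : ℝ) ≤ k := by exact_mod_cast hk
  have hkn' : 2 * (k : ℝ) ≤ n := by exact_mod_cast hkn
  have hn : (0 : ℝ) < n := by linarith
  have hn1 : (0 : ℝ) < n - 1 := by linarith
  have hn2 : (0 : ℝ) ≤ n - 2 := by linarith
  have hnk : (0 : ℝ) ≤ n - k := by linarith
  have hskew : 2 * (n - ℓ j : ℝ) * (2 * ℓ j - n) ≤ ℓ j * n := by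
    nlinarith [sq_nonneg (4 * ℓ j - 5 / 2 * n : ℝ), sq_nonneg (n : ℝ)]
  have hkey : (n - ℓ j : ℝ) * (2 * ℓ j - n) * (n - 2 * k) ≤ ℓ j * n / 2 * (n - 2) :=
    mul_le_mul (by linarith) (by linarith) (by linarith) (by positivity)
  rw [sum_hyperWeight_mul_sub_cube hℓ (by lia) (by lia)]
  calc _ = (ℓ j * k * (n - k) / (n ^ 3 * (n - 1)) *
        ((n - ℓ j) * (2 * ℓ j - n) * (n - 2 * k) / (n - 2)) : ℝ) := by
        rw [mul_div_assoc', div_mul_eq_mul_div, div_div, ← neg_div]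
        ring
    _ ≤ (ℓ j * k * (n - k) / (n ^ 3 * (n - 1)) * (ℓ j * n / 2) : ℝ) :=
        mul_le_mul_of_nonneg_left (div_le_of_le_mul₀ hn2 (by positivity) hkey) (by positivity)
    _ = _ := by
        field_simp

lemma natCast_remaining_sub_mean {s : ι → ℕ} (hs : s ∈ draws k ℓ) (hn : n ≠ 0) (j : ι) :
    ((ℓ j - s j : ℕ) - ℓ j * (n - k) / n : ℝ) = -(s j - ℓ j * k / n) := by
  have hn' : (n : ℝ) ≠ 0 := Nat.cast_ne_zero.2 hn
  rw [Nat.cast_sub ((mem_draws.1 hs).2 j)]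
  field_simp
  ring

lemma sum_hyperWeight_mul_remaining (hℓ : ∑ i, ℓ i = n) (hkn : k ≤ n) (hn : n ≠ 0) (j : ι) :
    ∑ s ∈ draws k ℓ, hyperWeight n k ℓ s * (ℓ j - s j : ℕ) = ℓ j * (n - k) / n := by
  have hn' : (n : ℝ) ≠ 0 := Nat.cast_ne_zero.2 hn
  have hterm : ∀ s ∈ draws k ℓ, hyperWeight n k ℓ s * ((ℓ j - s j : ℕ) : ℝ) =
      ℓ j * hyperWeight n k ℓ s - hyperWeight n k ℓ s * s j := by
    intro s hs
    rw [Nat.cast_sub ((mem_draws.1 hs).2 j)]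
    ring
  rw [sum_congr rfl hterm, sum_sub_distrib, ← mul_sum, sum_hyperWeight hℓ hkn,
    sum_hyperWeight_mul_apply hℓ hkn]
  field_simp

lemma sum_hyperWeight_mul_remaining_sub_sq (hℓ : ∑ i, ℓ i = n) (hkn : k ≤ n) (hn : 2 ≤ n)
    (j : ι) :
    ∑ s ∈ draws k ℓ, hyperWeight n k ℓ s * ((ℓ j - s j : ℕ) - ℓ j * (n - k) / n : ℝ) ^ 2 =
      ℓ j * k * (n - ℓ j) * (n - k) / (n ^ 2 * (n - 1)) := by
  rw [← sum_hyperWeight_mul_sub_sq hℓ hkn hn]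
  exact sum_congr rfl fun s hs ↦ by rw [natCast_remaining_sub_mean hs (by lia), neg_sq]

lemma sum_hyperWeight_mul_remaining_sub_cube_le (hℓ : ∑ i, ℓ i = n) (hk : 1 ≤ k)
    (hkn : 2 * k ≤ n) (j : ι) :
    ∑ s ∈ draws k ℓ, hyperWeight n k ℓ s * ((ℓ j - s j : ℕ) - ℓ j * (n - k) / n : ℝ) ^ 3 ≤
      ℓ j ^ 2 * k * (n - k) / (2 * n ^ 2 * (n - 1)) := by
  refine le_of_eq_of_le ?_ (neg_sum_hyperWeight_mul_sub_cube_le hℓ hk hkn j)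
  rw [← sum_neg_distrib]
  exact sum_congr rfl fun s hs ↦ by
    rw [natCast_remaining_sub_mean hs (by lia), Odd.neg_pow (by decide), mul_neg]

lemma sum_hyperWeight_mul_log_fallingRatio (hℓ : ∑ i, ℓ i = n) (hkn : k ≤ n) (j : ι) :
    ∑ s ∈ draws k ℓ, hyperWeight n k ℓ s * log (fallingRatio (ℓ j) (s j)) =
      log (ℓ j).factorial - ∑ s ∈ draws k ℓ, hyperWeight n k ℓ s * log (ℓ j - s j).factorial -
        ℓ j * k / n * log (ℓ j) := by
  have hterm : ∀ s ∈ draws k ℓ, hyperWeight n k ℓ s * log (fallingRatio (ℓ j) (s j)) =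
      hyperWeight n k ℓ s * log (ℓ j).factorial -
        hyperWeight n k ℓ s * log (ℓ j - s j).factorial -
          hyperWeight n k ℓ s * s j * log (ℓ j) := by
    intro s hs
    rw [log_fallingRatio ((mem_draws.1 hs).2 j)]
    ring
  rw [sum_congr rfl hterm, sum_sub_distrib, sum_sub_distrib, ← sum_mul, ← sum_mul,
    sum_hyperWeight hℓ hkn, sum_hyperWeight_mul_apply hℓ hkn, one_mul]

lemma sum_hyperWeight_mul_log_fallingRatio_le (hℓ : ∑ i, ℓ i = n) (hk : 1 ≤ k)
    (hkn : 2 * k ≤ n) {j : ι} (hj : 1 ≤ ℓ j) :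
    ∑ s ∈ draws k ℓ, hyperWeight n k ℓ s * log (fallingRatio (ℓ j) (s j)) ≤
      ℓ j / n * ((n - k) * log (n / (n - k)) - k + k / (2 * (n - 1))) +
        (1 / 2 * log (n / (n - k)) - k / (2 * (n - 1)) - k / (6 * (n - 1) * (n - k))) +
        k * (2 * n + 1) / (12 * n * (n - 1) * (n - k)) * (n / ℓ j) +
        1 / 360 * (1 / (n - k) ^ 3 - 1 / n ^ 3) * (n ^ 3 / ℓ j ^ 3) := by
  have hk' : (1 : ℝ) ≤ k := by exact_mod_cast hk
  have hkn' : 2 * (k : ℝ) ≤ n := by exact_mod_cast hkn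
  have hl : (0 : ℝ) < ℓ j := by exact_mod_cast hj
  have hn : (0 : ℝ) < n := by linarith
  have hn1 : (0 : ℝ) < n - 1 := by linarith
  have hnk : (0 : ℝ) < n - k := by linarith
  have hmean : (0 : ℝ) < ℓ j * (n - k) / n := by positivity
  have hmean_le : (ℓ j * (n - k) / n : ℝ) ≤ ℓ j := by
    rw [mul_div_assoc]
    exact mul_le_of_le_one_right hl.le ((div_le_one hn).2 (by linarith))
  have hlog : log (ℓ j * (n - k) / n) = log (ℓ j) - log (n / (n - k)) := by
    rw [mul_div_assoc, ← inv_div (n : ℝ), log_mul hl.ne' (by positivity), log_inv,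
      ← sub_eq_add_neg]
  rw [sum_hyperWeight_mul_log_fallingRatio hℓ (by lia)]
  calc _ ≤ stirlingLower (ℓ j) - stirlingLower (ℓ j * (n - k) / n) -
          1 / 2 * (1 / (ℓ j * (n - k) / n) - 1 / (2 * (ℓ j * (n - k) / n) ^ 2)) *
            (ℓ j * k * (n - ℓ j) * (n - k) / (n ^ 2 * (n - 1))) +
          ℓ j ^ 2 * k * (n - k) / (2 * n ^ 2 * (n - 1)) / (6 * (ℓ j * (n - k) / n) ^ 2) -
        ℓ j * k / n * log (ℓ j) := by
        rw [← sum_hyperWeight_mul_remaining_sub_sq hℓ (by lia) (by lia)]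
        gcongr
        exact log_factorial_sub_sum_mul_log_factorial_le (fun s _ ↦ hyperWeight_nonneg n k ℓ s)
          (sum_hyperWeight hℓ (by lia)) hmean hmean_le
          (sum_hyperWeight_mul_remaining hℓ (by lia) (by lia) j)
          (sum_hyperWeight_mul_remaining_sub_cube_le hℓ hk hkn j) (by positivity)
    _ = _ := by
        simp only [stirlingLower, stirlingUpper, hlog]
        generalize log (ℓ j : ℝ) = L
        generalize log (n / (n - k) : ℝ) = Λ
        field_simp
        ring

lemma sum_sum_hyperWeight_mul_log_fallingRatio_le (hℓ : ∑ i, ℓ i = n) (hk : 1 ≤ k)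
    (hkn : 2 * k ≤ n) (hℓpos : ∀ j, 1 ≤ ℓ j) :
    ∑ j, ∑ s ∈ draws k ℓ, hyperWeight n k ℓ s * log (fallingRatio (ℓ j) (s j)) ≤
      (n - k) * log (n / (n - k)) - k + k / (2 * (n - 1)) +
        Fintype.card ι *
          (1 / 2 * log (n / (n - k)) - k / (2 * (n - 1)) - k / (6 * (n - 1) * (n - k))) +
        k * (2 * n + 1) / (12 * n * (n - 1) * (n - k)) * ∑ j, (n / ℓ j : ℝ) +
        1 / 360 * (1 / (n - k) ^ 3 - 1 / n ^ 3) * ∑ j, (n ^ 3 / ℓ j ^ 3 : ℝ) := by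
  have hn : (n : ℝ) ≠ 0 := Nat.cast_ne_zero.2 (by lia)
  have hfrac : ∑ j, (ℓ j / n : ℝ) = 1 := by
    rw [← sum_div, ← Nat.cast_sum, hℓ, div_self hn]
  refine (sum_le_sum fun j _ ↦
    sum_hyperWeight_mul_log_fallingRatio_le hℓ hk hkn (hℓpos j)).trans_eq ?_
  rw [sum_add_distrib, sum_add_distrib, sum_add_distrib, ← sum_mul, ← mul_sum, ← mul_sum, hfrac,
    one_mul, sum_const, card_univ, nsmul_eq_mul]

end ColourBound

/-- **The Johnson–Gavalakis–Kontoyiannis composition-dependent relative entropy bound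
between sampling without and with replacement.** For an urn of `n` balls of `c ≥ 2` colours
with composition `ℓ` (each `ℓⱼ ≥ 1`) and any `1 ≤ k ≤ n/2`,
`D(H(ℓ,n,k;·) ‖ B(ℓ,n,k;·)) ≤ ((c−1)/2)(log(n/(n−k)) − k/(n−1))
  + (k(2n+1)/(12n(n−1)(n−k))) Σⱼ n/ℓⱼ + (1/360)(1/(n−k)³ − 1/n³) Σⱼ n³/ℓⱼ³`. -/
theorem jgk_sampling_relEntropy {c n k : ℕ} (hc : 2 ≤ c)
    (hk1 : 1 ≤ k) (hk2 : 2 * k ≤ n)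
    (ℓ : Fin c → ℕ) (hℓpos : ∀ j, 1 ≤ ℓ j) (hℓ : ∑ j, ℓ j = n) :
    relEntPMF (hyperPMF c n k ℓ) (multinomPMF c n k ℓ) ≤
      ((c : ℝ) - 1) / 2 * (Real.log ((n : ℝ) / ((n : ℝ) - k)) - (k : ℝ) / ((n : ℝ) - 1)) +
        ((k : ℝ) * (2 * n + 1)) / (12 * n * ((n : ℝ) - 1) * ((n : ℝ) - k)) *
          ∑ j, ((n : ℝ) / (ℓ j : ℝ)) +
        (1 / 360 : ℝ) * (1 / ((n : ℝ) - k) ^ 3 - 1 / (n : ℝ) ^ 3) *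
          ∑ j, ((n : ℝ) ^ 3 / (ℓ j : ℝ) ^ 3) := by
  have hc' : (2 : ℝ) ≤ c := by exact_mod_cast hc
  have hk : (1 : ℝ) ≤ k := by exact_mod_cast hk1
  have hkn : 2 * (k : ℝ) ≤ n := by exact_mod_cast hk2
  have hn1 : (0 : ℝ) < n - 1 := by linarith
  have hnk : (0 : ℝ) < n - k := by linarith
  have hcolours := sum_sum_hyperWeight_mul_log_fallingRatio_le hℓ hk1 hk2 hℓpos
  have htotal := le_log_fallingRatio (n := n) (k := k) (by lia)
  have herror : (k / (12 * n * (n - k)) : ℝ) ≤ c * (k / (6 * (n - 1) * (n - k))) := by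
    rw [mul_div_assoc', div_le_div_iff₀ (by nlinarith) (by positivity)]
    have : (6 * (n - 1) : ℝ) ≤ c * (12 * n) := by nlinarith
    linarith [mul_le_mul_of_nonneg_left this (by positivity : (0 : ℝ) ≤ k * (n - k))]
  have hhalf : (k / (2 * (n - 1)) : ℝ) = k / (n - 1) / 2 := by rw [mul_comm, div_div]
  rw [Fintype.card_fin, hhalf] at hcolours
  rw [relEntPMF_hyperPMF_multinomPMF hℓ (by lia)]
  linarith
end

section
/- Let X_1^n be an exchangeable random vector with values in a discrete (finite or countably infinite) set S such that the Shannon entropy H(X_1) is finite. Then there exists a probability measure μ*_n on (ℳ(S),ℱ) such that, for every k with k ≤ n − 2, the distribution P_k of X_1^k satisfies D(P_k ‖ M_{k,μ*_n}) ≤ [k(k−1)/(2(n−k−1))] · H(X_1). -/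
open MeasureTheory
open scoped ENNReal

/-- The space `ℳ(S)` of probability measures on a measurable space `S`, equipped with
the σ-algebra `ℱ` generated by the evaluation maps `P ↦ P(A)`, `A` measurable
(obtained here as the subtype σ-algebra of the canonical σ-algebra on measures). -/
noncomputable instance probabilityMeasureMeasurableSpace
    {α : Type*} [MeasurableSpace α] : MeasurableSpace (ProbabilityMeasure α) :=
  Subtype.instMeasurableSpace

open Classical in
/-- The Kullback–Leibler divergence (relative entropy) `D(μ‖ν)` between two measures,
defined as `∫ log (dμ/dν) dμ` when `μ ≪ ν` and this integral makes sense, and `+∞` otherwise. -/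
noncomputable def klDiv {α : Type*} [MeasurableSpace α] (μ ν : Measure α) : ℝ≥0∞ :=
  if μ ≪ ν ∧ Integrable (llr μ ν) μ then ENNReal.ofReal (∫ x, llr μ ν x ∂μ) else ⊤

/-- The Shannon entropy `H(μ) = −Σₓ μ{x} log μ{x}` (natural logarithm) of a discrete
probability measure. -/
noncomputable def shannonEntropy {α : Type*} [MeasurableSpace α] (μ : Measure α) : ℝ :=
  ∑' x : α, -((μ {x}).toReal * Real.log (μ {x}).toReal)

/-!
The mixing measure is the law of the empirical measure of the whole sample. Given the empirical
measure, `P_k` is sampling without replacement and `M_k` is sampling with replacement from it.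
Drawing the coordinates one at a time, the `i`-th point is uniform on the `n - i` coordinates that
remain, so `D(P_k ‖ M_k)` is at most the sum over `i` of the expected difference between the
log-frequency of that point in the remaining sample and its log-frequency in the whole sample.

Removing `m` coordinates raises the expected log-frequency by at most `m / (n - 1)` times the
expected negative log-frequency in the whole sample, by Jensen's and Bernoulli's inequalities; and
that expectation is at most `H(X₁)` by Gibbs' inequality. Summing `m = i` over `i < k` gives
`k (k - 1) / (2 (n - 1)) · H(X₁)`.
-/

section Gibbs

variable {Ω α : Type*} [MeasurableSpace Ω] [MeasurableSpace α] {P : Measure Ω}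

lemma integral_le_integral_of_lintegral_exp_sub_le_one [IsProbabilityMeasure P] {f g : Ω → ℝ}
    (hf : Integrable f P) (hg : Integrable g P)
    (h : ∫⁻ ω, ENNReal.ofReal (Real.exp (f ω - g ω)) ∂P ≤ 1) : ∫ ω, f ω ∂P ≤ ∫ ω, g ω ∂P := by
  have hfg : Integrable (fun ω => f ω - g ω) P := hf.sub hg
  have hexp0 : 0 ≤ᵐ[P] fun ω => Real.exp (f ω - g ω) := ae_of_all _ fun _ => (Real.exp_pos _).le
  have hexpm : AEStronglyMeasurable (fun ω => Real.exp (f ω - g ω)) P :=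
    Real.continuous_exp.comp_aestronglyMeasurable hfg.1
  have hexp : Integrable (fun ω => Real.exp (f ω - g ω)) P :=
    (lintegral_ofReal_ne_top_iff_integrable hexpm hexp0).1
      (ne_top_of_le_ne_top ENNReal.one_ne_top h)
  have hexp1 : ∫ ω, Real.exp (f ω - g ω) ∂P ≤ 1 := by
    rw [integral_eq_lintegral_of_nonneg_ae hexp0 hexpm]
    exact ENNReal.toReal_le_of_le_ofReal zero_le_one (by simpa using h)
  have hlin : ∫ ω, (f ω - g ω + 1) ∂P ≤ ∫ ω, Real.exp (f ω - g ω) ∂P :=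
    integral_mono (hfg.add (integrable_const 1)) hexp fun ω => Real.add_one_le_exp _
  rw [integral_add hfg (integrable_const 1), integral_sub hf hg] at hlin
  simp only [integral_const, probReal_univ, smul_eq_mul, mul_one] at hlin
  linarith

lemma lintegral_comp_mul_le_of_map_withDensity_le {M : Measure α} {X : Ω → α} {w : Ω → ℝ≥0∞}
    (hX : Measurable X) (hw : AEMeasurable w P) (h : (P.withDensity w).map X ≤ M) {F : α → ℝ≥0∞}
    (hF : Measurable F) : ∫⁻ ω, F (X ω) * w ω ∂P ≤ ∫⁻ y, F y ∂M := by
  refine le_trans (le_of_eq ?_) (lintegral_mono' h le_rfl)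
  rw [lintegral_map hF hX,
    lintegral_withDensity_eq_lintegral_mul₀ (g := fun ω => F (X ω)) hw (hF.comp hX).aemeasurable]
  simp only [Pi.mul_apply, mul_comm]

variable {M : Measure α} {X : Ω → α} {D : Ω → ℝ}

lemma absolutelyContinuous_map_of_map_withDensity_exp_neg_le (hX : Measurable X)
    (hD : AEMeasurable D P)
    (h : (P.withDensity fun ω => ENNReal.ofReal (Real.exp (-D ω))).map X ≤ M) : P.map X ≪ M :=
  ((withDensity_absolutelyContinuous' hD.neg.exp.ennreal_ofReal
    (ae_of_all _ fun _ => (ENNReal.ofReal_pos.2 (Real.exp_pos _)).ne')).map hX).trans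
    (Measure.absolutelyContinuous_of_le h)

variable [IsProbabilityMeasure P]

lemma lintegral_exp_llr_map_sub_le_one [SigmaFinite M] (hX : Measurable X)
    (hD : AEMeasurable D P)
    (h : (P.withDensity fun ω => ENNReal.ofReal (Real.exp (-D ω))).map X ≤ M) :
    ∫⁻ ω, ENNReal.ofReal (Real.exp (llr (P.map X) M (X ω) - D ω)) ∂P ≤ 1 := by
  have := Measure.isProbabilityMeasure_map (μ := P) hX.aemeasurable
  have hac := absolutelyContinuous_map_of_map_withDensity_exp_neg_le hX hD h
  have hllr : ∀ᵐ ω ∂P, Real.exp (llr (P.map X) M (X ω)) = ((P.map X).rnDeriv M (X ω)).toReal :=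
    ae_of_ae_map hX.aemeasurable (exp_llr_of_ac _ _ hac)
  calc ∫⁻ ω, ENNReal.ofReal (Real.exp (llr (P.map X) M (X ω) - D ω)) ∂P
      ≤ ∫⁻ ω, (P.map X).rnDeriv M (X ω) * ENNReal.ofReal (Real.exp (-D ω)) ∂P := by
        refine lintegral_mono_ae ?_
        filter_upwards [hllr] with ω hω
        rw [sub_eq_add_neg, Real.exp_add, hω, ENNReal.ofReal_mul ENNReal.toReal_nonneg]
        gcongr
        exact ENNReal.ofReal_toReal_le
    _ ≤ ∫⁻ y, (P.map X).rnDeriv M y ∂M :=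
        lintegral_comp_mul_le_of_map_withDensity_le hX hD.neg.exp.ennreal_ofReal h
          (Measure.measurable_rnDeriv _ _)
    _ ≤ 1 := Measure.lintegral_rnDeriv_le.trans prob_le_one

lemma integrable_llr_map_of_map_withDensity_exp_neg_le [IsFiniteMeasure M]
    (hX : Measurable X) (hD : Integrable D P)
    (h : (P.withDensity fun ω => ENNReal.ofReal (Real.exp (-D ω))).map X ≤ M) :
    Integrable (llr (P.map X) M) (P.map X) := by
  have hac := absolutelyContinuous_map_of_map_withDensity_exp_neg_le hX hD.aemeasurable h
  have hllrm : Measurable (llr (P.map X) M) := measurable_llr _ _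
  have hupper : Integrable (fun ω => Real.exp (llr (P.map X) M (X ω) - D ω)) P := by
    refine (lintegral_ofReal_ne_top_iff_integrable
      (((hllrm.comp hX).aemeasurable.sub hD.aemeasurable).exp.aestronglyMeasurable)
      (ae_of_all _ fun _ => (Real.exp_pos _).le)).1 (ne_top_of_le_ne_top ENNReal.one_ne_top ?_)
    exact lintegral_exp_llr_map_sub_le_one hX hD.aemeasurable h
  have hlower : Integrable (fun ω => Real.exp (-llr (P.map X) M (X ω))) P :=
    (Measure.integrable_toReal_rnDeriv.congr (exp_neg_llr hac).symm).comp_measurable hX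
  refine (integrable_map_measure hllrm.aestronglyMeasurable hX.aemeasurable).2 <|
    integrable_of_le_of_le (hllrm.comp hX).aestronglyMeasurable
      (g₁ := fun ω => -Real.exp (-llr (P.map X) M (X ω)))
      (g₂ := fun ω => Real.exp (llr (P.map X) M (X ω) - D ω) + D ω)
      (ae_of_all _ fun ω => ?_) (ae_of_all _ fun ω => ?_) hlower.neg (hupper.add hD)
  · have := Real.add_one_le_exp (-llr (P.map X) M (X ω))
    simp only [Function.comp_apply]
    linarith
  · have := Real.add_one_le_exp (llr (P.map X) M (X ω) - D ω)
    simp only [Function.comp_apply]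
    linarith

lemma klDiv_map_le_of_map_withDensity_exp_neg_le [IsFiniteMeasure M]
    (hX : Measurable X) (hD : Integrable D P)
    (h : (P.withDensity fun ω => ENNReal.ofReal (Real.exp (-D ω))).map X ≤ M) :
    klDiv (P.map X) M ≤ ENNReal.ofReal (∫ ω, D ω ∂P) := by
  have hac := absolutelyContinuous_map_of_map_withDensity_exp_neg_le hX hD.aemeasurable h
  have hint := integrable_llr_map_of_map_withDensity_exp_neg_le hX hD h
  rw [klDiv, if_pos ⟨hac, hint⟩,
    integral_map hX.aemeasurable (measurable_llr _ _).aestronglyMeasurable]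
  exact ENNReal.ofReal_le_ofReal <| integral_le_integral_of_lintegral_exp_sub_le_one
    (hint.comp_measurable hX) hD (lintegral_exp_llr_map_sub_le_one hX hD.aemeasurable h)

end Gibbs

section Mixture

variable {α S : Type*} [MeasurableSpace α] [MeasurableSpace S]

lemma lintegral_mul_singleton_div_le [Countable α] [MeasurableSingletonClass α] (μ ν : Measure α)
    (f : α → ℝ≥0∞) : ∫⁻ x, f x * (ν {x} / μ {x}) ∂μ ≤ ∫⁻ x, f x ∂ν := by
  rw [lintegral_countable', lintegral_countable']
  refine ENNReal.tsum_le_tsum fun x => ?_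
  rw [mul_assoc, mul_comm (_ / _)]
  gcongr
  exact ENNReal.mul_div_le

lemma lintegral_pi_snoc (μ : Measure S) [SigmaFinite μ] {k : ℕ} {f : (Fin (k + 1) → S) → ℝ≥0∞}
    (hf : Measurable f) :
    ∫⁻ y, f y ∂Measure.pi (fun _ => μ) =
      ∫⁻ y, ∫⁻ s, f (Fin.snoc y s) ∂μ ∂Measure.pi (fun _ : Fin k => μ) := by
  have hmp := measurePreserving_piFinSuccAbove (fun _ : Fin (k + 1) => μ) (Fin.last k)
  calc ∫⁻ y, f y ∂Measure.pi (fun _ => μ)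
      = ∫⁻ z, f ((Fin.last k).insertNth z.1 z.2) ∂μ.prod (Measure.pi fun _ => μ) :=
        (hmp.symm.lintegral_comp hf).symm
    _ = ∫⁻ y, ∫⁻ s, f (Fin.snoc y s) ∂μ ∂Measure.pi (fun _ => μ) := by
        refine (lintegral_prod_symm' _ (hf.comp hmp.symm.measurable)).trans ?_
        simp [MeasurableEquiv.piFinSuccAbove, Fin.insertNthEquiv, Fin.insertNth_last']

lemma measurable_pi_probabilityMeasure (k : ℕ) :
    Measurable fun Q : ProbabilityMeasure S => Measure.pi fun _ : Fin k => (Q : Measure S) := by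
  refine Measurable.measure_of_isPiSystem_of_isProbabilityMeasure
    generateFrom_pi.symm isPiSystem_pi ?_
  rintro _ ⟨t, ht, rfl⟩
  simp only [Measure.pi_pi]
  exact Finset.measurable_prod _ fun i _ =>
    (Measure.measurable_coe (ht i trivial)).comp measurable_subtype_coe

/-- The mixture `M_{k,μ}` of i.i.d. laws: `k` independent draws from a random measure of law
`μ`. -/
noncomputable def iidMixture (k : ℕ) (μ : Measure (ProbabilityMeasure S)) :
    Measure (Fin k → S) :=
  μ.bind fun Q => Measure.pi fun _ => (Q : Measure S)

lemma iidMixture_apply (k : ℕ) (μ : Measure (ProbabilityMeasure S)) {A : Set (Fin k → S)}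
    (hA : MeasurableSet A) :
    iidMixture k μ A =
      ∫⁻ Q : ProbabilityMeasure S, Measure.pi (fun _ : Fin k => (Q : Measure S)) A ∂μ :=
  Measure.bind_apply hA (measurable_pi_probabilityMeasure k).aemeasurable

instance (k : ℕ) (μ : Measure (ProbabilityMeasure S)) [IsProbabilityMeasure μ] :
    IsProbabilityMeasure (iidMixture k μ) :=
  ⟨by simp [iidMixture_apply]⟩

end Mixture

section Empirical

variable {ι S : Type*} {T U : Finset ι} {a : ι}

/-- A function of the sample that is invariant under the permutations of the coordinates in `T`,
the other coordinates being held fixed. -/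
def PermInvariantOn {β : Type*} (T : Finset ι) (Φ : (ι → S) → β) : Prop :=
  ∀ σ : Equiv.Perm ι, (∀ l ∉ T, σ l = l) → ∀ ω, Φ (ω ∘ σ) = Φ ω

lemma PermInvariantOn.mono {β : Type*} {Φ : (ι → S) → β} (hΦ : PermInvariantOn T Φ) (h : U ⊆ T) :
    PermInvariantOn U Φ :=
  fun σ hσ => hΦ σ fun l hl => hσ l fun hU => hl (h hU)

variable [MeasurableSpace S]

/-- The empirical measure of the sample `(ω j)_{j ∈ T}`; it is zero when `T = ∅`. -/
noncomputable def empiricalMeasure (T : Finset ι) (ω : ι → S) : Measure S :=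
  (T.card : ℝ≥0∞)⁻¹ • ∑ j ∈ T, Measure.dirac (ω j)

instance (T : Finset ι) (ω : ι → S) : IsFiniteMeasure (empiricalMeasure T ω) :=
  ⟨by simpa [empiricalMeasure] using (ENNReal.inv_mul_le_one _).trans_lt ENNReal.one_lt_top⟩

lemma isProbabilityMeasure_empiricalMeasure (hT : T.Nonempty) (ω : ι → S) :
    IsProbabilityMeasure (empiricalMeasure T ω) :=
  ⟨by simp [empiricalMeasure, ENNReal.inv_mul_cancel, hT.ne_empty]⟩

lemma toReal_empiricalMeasure_le_one (hT : T.Nonempty) (ω : ι → S) (s : Set S) :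
    (empiricalMeasure T ω s).toReal ≤ 1 :=
  have := isProbabilityMeasure_empiricalMeasure hT ω
  measureReal_le_one

lemma permInvariantOn_empiricalMeasure (T : Finset ι) :
    PermInvariantOn T (empiricalMeasure (S := S) T) := by
  intro σ hσ ω
  have hsupp : {l | σ l ≠ l} ⊆ T := fun l hl => by_contra fun hT => hl (hσ l hT)
  simp only [empiricalMeasure, Function.comp_apply,
    Equiv.Perm.sum_comp σ T (fun j => Measure.dirac (ω j)) hsupp]

variable [MeasurableSingletonClass S]

lemma lintegral_empiricalMeasure (T : Finset ι) (ω : ι → S) (f : S → ℝ≥0∞) :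
    ∫⁻ s, f s ∂empiricalMeasure T ω = (T.card : ℝ≥0∞)⁻¹ * ∑ j ∈ T, f (ω j) := by
  simp [empiricalMeasure, lintegral_finsetSum_measure]

lemma card_mul_empiricalMeasure_singleton (T : Finset ι) (ω : ι → S) (x : S) :
    T.card * empiricalMeasure T ω {x} = ∑ j ∈ T, Set.indicator {x} 1 (ω j) := by
  rcases T.eq_empty_or_nonempty with rfl | hT
  · simp
  · simp [empiricalMeasure, ← mul_assoc, ENNReal.mul_inv_cancel, hT.ne_empty]

lemma card_mul_empiricalMeasure_singleton_self [DecidableEq ι] (ha : a ∈ T) (ω : ι → S) :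
    T.card * empiricalMeasure T ω {ω a} =
      1 + (T.erase a).card * empiricalMeasure (T.erase a) ω {ω a} := by
  rw [card_mul_empiricalMeasure_singleton, card_mul_empiricalMeasure_singleton,
    ← Finset.add_sum_erase T _ ha]
  simp

lemma one_le_card_mul_empiricalMeasure_singleton_self (ha : a ∈ T) (ω : ι → S) :
    1 ≤ T.card * empiricalMeasure T ω {ω a} := by
  classical
  rw [card_mul_empiricalMeasure_singleton_self ha]
  exact le_self_add

lemma empiricalMeasure_singleton_self_ne_zero (ha : a ∈ T) (ω : ι → S) :
    empiricalMeasure T ω {ω a} ≠ 0 :=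
  right_ne_zero_of_mul
    (zero_lt_one.trans_le (one_le_card_mul_empiricalMeasure_singleton_self ha ω)).ne'

lemma toReal_empiricalMeasure_singleton_self_pos (ha : a ∈ T) (ω : ι → S) :
    0 < (empiricalMeasure T ω {ω a}).toReal :=
  ENNReal.toReal_pos (empiricalMeasure_singleton_self_ne_zero ha ω) (measure_ne_top _ _)

lemma card_mul_toReal_empiricalMeasure_singleton_self [DecidableEq ι] (ha : a ∈ T) (ω : ι → S) :
    T.card * (empiricalMeasure T ω {ω a}).toReal =
      1 + (T.erase a).card * (empiricalMeasure (T.erase a) ω {ω a}).toReal := by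
  simpa [ENNReal.toReal_add, ENNReal.mul_eq_top, -Finset.card_erase_of_mem]
    using congrArg ENNReal.toReal (card_mul_empiricalMeasure_singleton_self ha ω)

lemma ofReal_exp_log_sub_log {x y : ℝ≥0∞} (hx₀ : x ≠ 0) (hx : x ≠ ⊤) (hy₀ : y ≠ 0) (hy : y ≠ ⊤) :
    ENNReal.ofReal (Real.exp (Real.log x.toReal - Real.log y.toReal)) = x / y := by
  have hxpos : 0 < x.toReal := ENNReal.toReal_pos hx₀ hx
  have hypos : 0 < y.toReal := ENNReal.toReal_pos hy₀ hy
  rw [Real.exp_sub, Real.exp_log hxpos, Real.exp_log hypos, ENNReal.ofReal_div_of_pos hypos,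
    ENNReal.ofReal_toReal hx, ENNReal.ofReal_toReal hy]

end Empirical

section Exchangeable

variable {ι S : Type*} [MeasurableSpace S] {P : Measure (ι → S)} {T U : Finset ι} {a : ι}

/-- Exchangeability: the joint law of the family is invariant under every permutation of the
indices. -/
def Exchangeable (P : Measure (ι → S)) : Prop :=
  ∀ σ : Equiv.Perm ι, P.map (fun ω => ω ∘ σ) = P

namespace Exchangeable

lemma measurePreserving (hP : Exchangeable P) (σ : Equiv.Perm ι) :
    MeasurePreserving (MeasurableEquiv.arrowCongr' σ.symm (.refl S)) P P :=
  ⟨MeasurableEquiv.measurable _, hP σ⟩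

lemma lintegral_comp_perm (hP : Exchangeable P) (σ : Equiv.Perm ι) (f : (ι → S) → ℝ≥0∞) :
    ∫⁻ ω, f (ω ∘ σ) ∂P = ∫⁻ ω, f ω ∂P :=
  (hP.measurePreserving σ).lintegral_comp_emb (MeasurableEquiv.measurableEmbedding _) f

lemma map_eval_eq (hP : Exchangeable P) (a b : ι) :
    P.map (fun ω => ω a) = P.map (fun ω => ω b) := by
  classical
  conv_lhs => rw [← hP (Equiv.swap a b)]
  rw [Measure.map_map (by fun_prop) (by fun_prop)]
  simp only [Function.comp_def, Equiv.swap_apply_left]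

lemma lintegral_apply_eq_of_mem (hP : Exchangeable P) {b : ι} (ha : a ∈ T) (hb : b ∈ T)
    {Φ : (ι → S) → S → ℝ≥0∞} (hΦ : PermInvariantOn T Φ) :
    ∫⁻ ω, Φ ω (ω a) ∂P = ∫⁻ ω, Φ ω (ω b) ∂P := by
  classical
  have hfix : ∀ l ∉ T, Equiv.swap a b l = l := fun l hl =>
    Equiv.swap_apply_of_ne_of_ne (fun h => hl (h ▸ ha)) fun h => hl (h ▸ hb)
  rw [← hP.lintegral_comp_perm (Equiv.swap a b)]
  simp only [hΦ _ hfix, Function.comp_apply, Equiv.swap_apply_left]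

variable [Finite ι] [Countable S] [MeasurableSingletonClass S]

lemma lintegral_apply_eq_lintegral_empiricalMeasure (hP : Exchangeable P) (ha : a ∈ T)
    {Φ : (ι → S) → S → ℝ≥0∞} (hΦ : PermInvariantOn T Φ) :
    ∫⁻ ω, Φ ω (ω a) ∂P = ∫⁻ ω, ∫⁻ s, Φ ω s ∂empiricalMeasure T ω ∂P := by
  have hcard : (T.card : ℝ≥0∞) ≠ 0 := by simpa using Finset.ne_empty_of_mem ha
  simp only [lintegral_empiricalMeasure]
  rw [lintegral_const_mul _ .of_discrete, lintegral_finsetSum _ fun _ _ => .of_discrete,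
    Finset.sum_congr rfl fun j hj => hP.lintegral_apply_eq_of_mem hj ha hΦ, Finset.sum_const,
    nsmul_eq_mul, ← mul_assoc, ENNReal.inv_mul_cancel hcard (ENNReal.natCast_ne_top _), one_mul]

lemma lintegral_empiricalMeasure_eq_of_subset (hP : Exchangeable P) (hU : U.Nonempty) (hUT : U ⊆ T)
    {Φ : (ι → S) → S → ℝ≥0∞} (hΦ : PermInvariantOn T Φ) :
    ∫⁻ ω, ∫⁻ s, Φ ω s ∂empiricalMeasure U ω ∂P = ∫⁻ ω, ∫⁻ s, Φ ω s ∂empiricalMeasure T ω ∂P := by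
  obtain ⟨b, hb⟩ := hU
  rw [← hP.lintegral_apply_eq_lintegral_empiricalMeasure hb (hΦ.mono hUT),
    hP.lintegral_apply_eq_lintegral_empiricalMeasure (hUT hb) hΦ]

end Exchangeable

/-- The ratio, at the point `ω a`, of the probabilities under sampling with replacement (from all of
`ω`) and under sampling without replacement (from `(ω j)_{j ∈ T}`). -/
noncomputable def empiricalRatio [Fintype ι] (T : Finset ι) (a : ι) (ω : ι → S) : ℝ≥0∞ :=
  empiricalMeasure Finset.univ ω {ω a} / empiricalMeasure T ω {ω a}

lemma Exchangeable.lintegral_mul_empiricalRatio_le [Fintype ι] [Countable S]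
    [MeasurableSingletonClass S] (hP : Exchangeable P) (ha : a ∈ T) {Φ : (ι → S) → S → ℝ≥0∞}
    (hΦ : PermInvariantOn T Φ) :
    ∫⁻ ω, Φ ω (ω a) * empiricalRatio T a ω ∂P ≤
      ∫⁻ ω, ∫⁻ s, Φ ω s ∂empiricalMeasure Finset.univ ω ∂P := by
  have hinv : PermInvariantOn T fun (ω : ι → S) s =>
      Φ ω s * (empiricalMeasure Finset.univ ω {s} / empiricalMeasure T ω {s}) := by
    intro σ hσ ω
    simp only [hΦ σ hσ ω, permInvariantOn_empiricalMeasure T σ hσ ω,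
      (permInvariantOn_empiricalMeasure Finset.univ).mono T.subset_univ σ hσ ω]
  refine (hP.lintegral_apply_eq_lintegral_empiricalMeasure ha hinv).trans_le ?_
  exact lintegral_mono fun ω => lintegral_mul_singleton_div_le _ _ (Φ ω)

end Exchangeable

section LogFreq

variable {ι S : Type*} [MeasurableSpace S] {T : Finset ι} {a : ι}

/-- The logarithm of the frequency of the value `ω a` in the sample `(ω j)_{j ∈ T}`. -/
noncomputable def logFreq (T : Finset ι) (a : ι) (ω : ι → S) : ℝ :=
  Real.log (empiricalMeasure T ω {ω a}).toReal

/-- The empirical measure of the whole sample as an element of `ℳ(S)`; its law is the mixing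
measure `μ*ₙ`. -/
noncomputable def empiricalProbability [Fintype ι] [Nonempty ι] (ω : ι → S) :
    ProbabilityMeasure S :=
  ⟨empiricalMeasure Finset.univ ω,
    isProbabilityMeasure_empiricalMeasure Finset.univ_nonempty ω⟩

lemma logFreq_nonpos (ha : a ∈ T) (ω : ι → S) : logFreq T a ω ≤ 0 :=
  Real.log_nonpos ENNReal.toReal_nonneg (toReal_empiricalMeasure_le_one ⟨a, ha⟩ ω _)

variable [MeasurableSingletonClass S]

lemma ofReal_exp_logFreq_univ_sub [Fintype ι] (ha : a ∈ T) (ω : ι → S) :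
    ENNReal.ofReal (Real.exp (logFreq Finset.univ a ω - logFreq T a ω)) =
      empiricalRatio T a ω :=
  ofReal_exp_log_sub_log (empiricalMeasure_singleton_self_ne_zero (Finset.mem_univ a) ω)
    (measure_ne_top _ _) (empiricalMeasure_singleton_self_ne_zero ha ω) (measure_ne_top _ _)

lemma neg_log_card_le_logFreq (ha : a ∈ T) (ω : ι → S) : -Real.log T.card ≤ logFreq T a ω := by
  classical
  have hcard : (0 : ℝ) < T.card := by exact_mod_cast Finset.card_pos.2 ⟨a, ha⟩
  have hone : 1 ≤ T.card * (empiricalMeasure T ω {ω a}).toReal := by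
    rw [card_mul_toReal_empiricalMeasure_singleton_self ha]
    exact le_add_of_nonneg_right (by positivity)
  rw [← Real.log_inv]
  exact Real.log_le_log (by positivity) ((inv_le_iff_one_le_mul₀' hcard).2 hone)

lemma integrable_logFreq [Finite ι] [Countable S] {P : Measure (ι → S)} [IsFiniteMeasure P]
    (ha : a ∈ T) : Integrable (logFreq T a) P :=
  .of_bound Measurable.of_discrete.aestronglyMeasurable (Real.log T.card) <|
    ae_of_all _ fun ω => by
      rw [Real.norm_eq_abs, abs_le]
      exact ⟨neg_log_card_le_logFreq ha ω,
        (logFreq_nonpos ha ω).trans (Real.log_natCast_nonneg _)⟩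

end LogFreq

section Domination

variable {n k : ℕ} {S : Type*} [MeasurableSpace S] {P : Measure (Fin n → S)}

lemma permInvariantOn_mul_prod_empiricalRatio (h : k + 1 ≤ n)
    {F : (Fin n → S) → (Fin (k + 1) → S) → ℝ≥0∞} (hF : PermInvariantOn Finset.univ F) :
    PermInvariantOn (Finset.Ici (Fin.castLE h (Fin.last k))) fun ω s =>
      F ω (Fin.snoc (fun i => ω (Fin.castLE h i.castSucc)) s) *
        ∏ i : Fin k, empiricalRatio (Finset.Ici (Fin.castLE h i.castSucc))
          (Fin.castLE h i.castSucc) ω := by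
  intro σ hσ ω
  have hfix (i : Fin k) : σ (Fin.castLE h i.castSucc) = Fin.castLE h i.castSucc :=
    hσ _ (by simp [Fin.le_def])
  have hsub (i : Fin k) :
      Finset.Ici (Fin.castLE h (Fin.last k)) ⊆ Finset.Ici (Fin.castLE h i.castSucc) :=
    Finset.Ici_subset_Ici.2 (by simp [Fin.le_def])
  simp only [hF σ (by simp) ω, Function.comp_apply, hfix, empiricalRatio,
    permInvariantOn_empiricalMeasure Finset.univ σ (by simp) ω,
    (permInvariantOn_empiricalMeasure _).mono (hsub _) σ hσ ω]

lemma permInvariantOn_lintegral_snoc_empiricalMeasure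
    {F : (Fin n → S) → (Fin (k + 1) → S) → ℝ≥0∞} (hF : PermInvariantOn Finset.univ F) :
    PermInvariantOn Finset.univ fun ω y =>
      ∫⁻ s, F ω (Fin.snoc y s) ∂empiricalMeasure Finset.univ ω := by
  intro σ hσ ω
  simp only [hF σ hσ ω, permInvariantOn_empiricalMeasure Finset.univ σ hσ ω]

variable [Countable S] [MeasurableSingletonClass S]

/- The `k` coordinates are exposed from the last one to the first: given `ω i` for `i < k`, the
point `ω k` is uniform among the `ω j` with `j ≥ k`. -/
lemma Exchangeable.lintegral_mul_prod_empiricalRatio_le (hP : Exchangeable P) (h : k ≤ n)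
    {F : (Fin n → S) → (Fin k → S) → ℝ≥0∞} (hF : PermInvariantOn Finset.univ F) :
    ∫⁻ ω, F ω (fun i => ω (Fin.castLE h i)) *
        ∏ i, empiricalRatio (Finset.Ici (Fin.castLE h i)) (Fin.castLE h i) ω ∂P ≤
      ∫⁻ ω, ∫⁻ y, F ω y ∂Measure.pi (fun _ => empiricalMeasure Finset.univ ω) ∂P := by
  induction k with
  | zero => simp [Subsingleton.elim _ (isEmptyElim : Fin 0 → S)]
  | succ k ih =>
    let a : Fin n := Fin.castLE h (Fin.last k)
    let R ω := ∏ i : Fin k, empiricalRatio (S := S) (Finset.Ici (Fin.castLE h i.castSucc))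
      (Fin.castLE h i.castSucc) ω
    have hsnoc (ω : Fin n → S) : (fun i => ω (Fin.castLE h i)) =
        (Fin.snoc (fun i : Fin k => ω (Fin.castLE h i.castSucc)) (ω a) : Fin (k + 1) → S) :=
      (Fin.snoc_init_self fun i => ω (Fin.castLE h i)).symm
    have (ω : Fin n → S) : IsProbabilityMeasure (empiricalMeasure Finset.univ ω) :=
      isProbabilityMeasure_empiricalMeasure ⟨a, Finset.mem_univ a⟩ ω
    calc ∫⁻ ω, F ω (fun i => ω (Fin.castLE h i)) *
          ∏ i, empiricalRatio (Finset.Ici (Fin.castLE h i)) (Fin.castLE h i) ω ∂P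
        = ∫⁻ ω, F ω (Fin.snoc (fun i => ω (Fin.castLE h i.castSucc)) (ω a)) * R ω *
            empiricalRatio (Finset.Ici a) a ω ∂P := by
          simp only [Fin.prod_univ_castSucc, hsnoc, mul_assoc, R, a]
      _ ≤ ∫⁻ ω, ∫⁻ s, F ω (Fin.snoc (fun i => ω (Fin.castLE h i.castSucc)) s) * R ω
            ∂empiricalMeasure Finset.univ ω ∂P :=
          hP.lintegral_mul_empiricalRatio_le (Finset.mem_Ici.2 le_rfl)
            (permInvariantOn_mul_prod_empiricalRatio h hF)
      _ = ∫⁻ ω, (∫⁻ s, F ω (Fin.snoc (fun i => ω (Fin.castLE h i.castSucc)) s)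
            ∂empiricalMeasure Finset.univ ω) * R ω ∂P := by
          simp only [lintegral_mul_const _ Measurable.of_discrete]
      _ ≤ ∫⁻ ω, ∫⁻ y, ∫⁻ s, F ω (Fin.snoc y s) ∂empiricalMeasure Finset.univ ω
            ∂Measure.pi (fun _ => empiricalMeasure Finset.univ ω) ∂P :=
          ih (Nat.le_of_succ_le h) (permInvariantOn_lintegral_snoc_empiricalMeasure hF)
      _ = ∫⁻ ω, ∫⁻ y, F ω y ∂Measure.pi (fun _ => empiricalMeasure Finset.univ ω) ∂P := by
          simp only [lintegral_pi_snoc _ Measurable.of_discrete]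

lemma iidMixture_map_empiricalProbability_apply [NeZero n] {A : Set (Fin k → S)}
    (hA : MeasurableSet A) :
    iidMixture k (P.map empiricalProbability) A =
      ∫⁻ ω, Measure.pi (fun _ => empiricalMeasure Finset.univ ω) A ∂P := by
  rw [iidMixture_apply k _ hA, lintegral_map _ .of_discrete]
  · rfl
  · exact (Measure.measurable_coe hA).comp (measurable_pi_probabilityMeasure k)

lemma Exchangeable.map_withDensity_prod_empiricalRatio_le [NeZero n] (hP : Exchangeable P)
    (h : k ≤ n) :
    (P.withDensity fun ω =>
        ∏ i, empiricalRatio (Finset.Ici (Fin.castLE h i)) (Fin.castLE h i) ω).map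
      (fun ω i => ω (Fin.castLE h i)) ≤ iidMixture k (P.map empiricalProbability) := by
  refine Measure.le_iff.2 fun A hA => ?_
  have hle := hP.lintegral_mul_prod_empiricalRatio_le h
    (F := fun _ => A.indicator 1) fun _ _ _ => rfl
  simp only [lintegral_indicator_one hA] at hle
  rw [iidMixture_map_empiricalProbability_apply hA]
  refine le_trans (le_of_eq ?_) hle
  rw [← lintegral_indicator_one hA, lintegral_map (.of_discrete) .of_discrete,
    lintegral_withDensity_eq_lintegral_mul _ .of_discrete .of_discrete]
  simp only [Pi.mul_apply, mul_comm]

lemma Exchangeable.klDiv_map_iidMixture_le [NeZero n] [IsProbabilityMeasure P]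
    (hP : Exchangeable P) (h : k ≤ n) :
    klDiv (P.map fun ω i => ω (Fin.castLE h i)) (iidMixture k (P.map empiricalProbability)) ≤
      ENNReal.ofReal (∑ i : Fin k,
        (∫ ω, logFreq (Finset.Ici (Fin.castLE h i)) (Fin.castLE h i) ω ∂P -
          ∫ ω, logFreq Finset.univ (Fin.castLE h i) ω ∂P)) := by
  have := Measure.isProbabilityMeasure_map (μ := P)
    (Measurable.of_discrete (f := empiricalProbability (ι := Fin n) (S := S))).aemeasurable
  have hint (i : Fin k) : Integrable (fun ω : Fin n → S =>
      logFreq (Finset.Ici (Fin.castLE h i)) (Fin.castLE h i) ω -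
        logFreq Finset.univ (Fin.castLE h i) ω) P :=
    (integrable_logFreq (Finset.mem_Ici.2 le_rfl)).sub (integrable_logFreq (Finset.mem_univ _))
  simp_rw [← integral_sub (integrable_logFreq (P := P) (Finset.mem_Ici.2 le_rfl))
    (integrable_logFreq (Finset.mem_univ _))]
  rw [← integral_finsetSum _ fun i _ => hint i]
  refine klDiv_map_le_of_map_withDensity_exp_neg_le .of_discrete
    (integrable_finsetSum _ fun i _ => hint i) ?_
  convert hP.map_withDensity_prod_empiricalRatio_le h using 4 with ω
  rw [← Finset.sum_neg_distrib, Real.exp_sum,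
    ENNReal.ofReal_prod_of_nonneg fun _ _ => (Real.exp_pos _).le]
  simp only [neg_sub, ofReal_exp_logFreq_univ_sub (Finset.mem_Ici.2 le_rfl)]

end Domination

section Subsample

variable {ι S : Type*} [MeasurableSpace S] [MeasurableSingletonClass S] {P : Measure (ι → S)}
  {T U : Finset ι} {a : ι}

lemma one_add_mul_mul_rpow_le {t x y : ℝ} (ht₀ : 0 ≤ t) (ht₁ : t ≤ 1) (hx : 1 ≤ x)
    (hxy : x ≤ y) : (1 + t * (x - 1)) * y ^ t ≤ (1 + t * (y - 1)) * x ^ t := by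
  have hx₀ : 0 < x := zero_lt_one.trans_le hx
  obtain ⟨r, rfl⟩ : ∃ r, y = x * r := ⟨y / x, by field_simp⟩
  have hr : 1 ≤ r := by nlinarith
  have hbernoulli : r ^ t ≤ 1 + t * (r - 1) := by
    simpa using rpow_one_add_le_one_add_mul_self (s := r - 1) (by linarith) ht₀ ht₁
  have hprod : (1 + t * (x - 1)) * (1 + t * (r - 1)) ≤ 1 + t * (x * r - 1) := by
    have : 0 ≤ t * (1 - t) * ((x - 1) * (r - 1)) := by
      have := sub_nonneg.2 ht₁
      have := mul_nonneg (sub_nonneg.2 hx) (sub_nonneg.2 hr)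
      positivity
    linarith
  have : 0 ≤ 1 + t * (x - 1) := by nlinarith
  calc (1 + t * (x - 1)) * (x * r) ^ t
      = (1 + t * (x - 1)) * r ^ t * x ^ t := by
        rw [Real.mul_rpow hx₀.le (by linarith)]; ring
    _ ≤ (1 + t * (x - 1)) * (1 + t * (r - 1)) * x ^ t := by gcongr
    _ ≤ (1 + t * (x * r - 1)) * x ^ t := by gcongr

lemma Exchangeable.lintegral_empiricalMeasure_singleton_mul_eq_of_subset [Finite ι] [Countable S]
    (hP : Exchangeable P) (hU : U.Nonempty) (hUT : U ⊆ T) (ha : a ∉ T) {g : (ι → S) → ℝ≥0∞}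
    (hg : PermInvariantOn T g) :
    ∫⁻ ω, empiricalMeasure U ω {ω a} * g ω ∂P = ∫⁻ ω, empiricalMeasure T ω {ω a} * g ω ∂P := by
  have hinv : PermInvariantOn T fun (ω : ι → S) s => Set.indicator {ω a} 1 s * g ω := by
    intro σ hσ ω
    simp only [hg σ hσ ω, Function.comp_apply, hσ a ha]
  simpa only [lintegral_mul_const _ Measurable.of_discrete,
    lintegral_indicator_one (measurableSet_singleton _)]
    using hP.lintegral_empiricalMeasure_eq_of_subset hU hUT hinv

variable [Fintype ι] [DecidableEq ι]

lemma Exchangeable.lintegral_card_mul_empiricalMeasure_div_eq_one [Countable S]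
    [IsProbabilityMeasure P] (hP : Exchangeable P) (ha : a ∈ T) :
    ∫⁻ ω, T.card * empiricalMeasure T ω {ω a} /
      (1 + (T.erase a).card * empiricalMeasure (Finset.univ.erase a) ω {ω a}) ∂P = 1 := by
  let g (ω : ι → S) : ℝ≥0∞ :=
    (1 + (T.erase a).card * empiricalMeasure (Finset.univ.erase a) ω {ω a})⁻¹
  have hg : PermInvariantOn (Finset.univ.erase a) g := by
    intro σ hσ ω
    simp only [g, Function.comp_apply, hσ a (by simp), permInvariantOn_empiricalMeasure _ σ hσ ω]
  have hswap : ∫⁻ ω, (T.erase a).card * (empiricalMeasure (T.erase a) ω {ω a} * g ω) ∂P =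
      ∫⁻ ω, (T.erase a).card * (empiricalMeasure (Finset.univ.erase a) ω {ω a} * g ω) ∂P := by
    rcases (T.erase a).eq_empty_or_nonempty with hT | hT
    · simp [hT]
    · rw [lintegral_const_mul _ .of_discrete, lintegral_const_mul _ .of_discrete,
        hP.lintegral_empiricalMeasure_singleton_mul_eq_of_subset hT
          (Finset.erase_subset_erase a T.subset_univ) (by simp) hg]
  have hcancel (ω : ι → S) : g ω + (T.erase a).card *
      (empiricalMeasure (Finset.univ.erase a) ω {ω a} * g ω) = 1 := by
    rw [← mul_assoc, ← one_add_mul, ENNReal.mul_inv_cancel (by simp) (by finiteness)]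
  calc ∫⁻ ω, T.card * empiricalMeasure T ω {ω a} /
        (1 + (T.erase a).card * empiricalMeasure (Finset.univ.erase a) ω {ω a}) ∂P
      = ∫⁻ ω, g ω + (T.erase a).card * (empiricalMeasure (T.erase a) ω {ω a} * g ω) ∂P := by
        simp only [card_mul_empiricalMeasure_singleton_self ha, div_eq_mul_inv, add_mul, one_mul,
          mul_assoc, g]
    _ = ∫⁻ ω, g ω + (T.erase a).card *
          (empiricalMeasure (Finset.univ.erase a) ω {ω a} * g ω) ∂P := by
        rw [lintegral_add_left .of_discrete, hswap, lintegral_add_left .of_discrete]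
    _ = 1 := by simp [hcancel]

lemma one_add_mul_toReal_empiricalMeasure_le {t : ℝ} (ht₀ : 0 ≤ t) (ht₁ : t ≤ 1)
    (ht : t * (Fintype.card ι - 1) = (T.erase a).card) (ha : a ∈ T) (ω : ι → S) :
    1 + (T.erase a).card * (empiricalMeasure (Finset.univ.erase a) ω {ω a}).toReal ≤
      T.card * (empiricalMeasure Finset.univ ω {ω a}).toReal ^ t := by
  have hmem := Finset.mem_univ a
  have hcard : (T.card : ℝ) = 1 + t * (Fintype.card ι - 1) := by
    rw [ht, Finset.cast_card_erase_of_mem ha]; ring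
  have hrec := card_mul_toReal_empiricalMeasure_singleton_self hmem ω
  rw [Finset.cast_card_erase_of_mem hmem, Finset.card_univ] at hrec
  have hn : (1 : ℝ) ≤ Fintype.card ι := by exact_mod_cast Fintype.card_pos_iff.2 ⟨a⟩
  have hpos := toReal_empiricalMeasure_singleton_self_pos hmem ω
  have hle := toReal_empiricalMeasure_le_one ⟨a, hmem⟩ ω {ω a}
  have hnonneg : 0 ≤ (empiricalMeasure (Finset.univ.erase a) ω {ω a}).toReal :=
    ENNReal.toReal_nonneg
  have hbernoulli := one_add_mul_mul_rpow_le ht₀ ht₁ (y := Fintype.card ι)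
    (x := Fintype.card ι * (empiricalMeasure Finset.univ ω {ω a}).toReal)
    (by nlinarith) (by nlinarith)
  rw [Real.mul_rpow (by linarith) hpos.le, hrec, ← hcard, add_sub_cancel_left, ← mul_assoc, ht,
    mul_left_comm, mul_comm (_ ^ t)] at hbernoulli
  exact le_of_mul_le_mul_right hbernoulli (by positivity)

lemma exp_logFreq_sub_mul_le {t : ℝ} (ht₀ : 0 ≤ t) (ht₁ : t ≤ 1)
    (ht : t * (Fintype.card ι - 1) = (T.erase a).card) (ha : a ∈ T) (ω : ι → S) :
    Real.exp (logFreq T a ω - t * logFreq Finset.univ a ω) ≤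
      (T.card * empiricalMeasure T ω {ω a} /
        (1 + (T.erase a).card * empiricalMeasure (Finset.univ.erase a) ω {ω a})).toReal := by
  have hle := one_add_mul_toReal_empiricalMeasure_le ht₀ ht₁ ht ha ω
  have hT := toReal_empiricalMeasure_singleton_self_pos ha ω
  have huniv := toReal_empiricalMeasure_singleton_self_pos (Finset.mem_univ a) ω
  have hdenom : (1 + (T.erase a).card *
      empiricalMeasure (Finset.univ.erase a) ω {ω a}).toReal =
        1 + (T.erase a).card * (empiricalMeasure (Finset.univ.erase a) ω {ω a}).toReal := by
    rw [ENNReal.toReal_add (by finiteness) (by finiteness), ENNReal.toReal_mul]; simp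
  rw [ENNReal.toReal_div, hdenom, ENNReal.toReal_mul, ENNReal.toReal_natCast, Real.exp_sub,
    mul_comm t, logFreq, logFreq, Real.exp_log hT, ← Real.rpow_def_of_pos huniv,
    div_le_div_iff₀ (by positivity) (by positivity)]
  linarith [mul_le_mul_of_nonneg_left hle hT.le]

lemma Exchangeable.integral_logFreq_sub_le [Countable S] [IsProbabilityMeasure P]
    (hP : Exchangeable P) (ha : a ∈ T) :
    ∫ ω, logFreq T a ω ∂P - ∫ ω, logFreq Finset.univ a ω ∂P ≤
      Tᶜ.card * (-(∫ ω, logFreq Finset.univ a ω ∂P) / (Fintype.card ι - 1)) := by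
  have hT : (1 : ℝ) ≤ T.card := by exact_mod_cast Finset.card_pos.2 ⟨a, ha⟩
  have hcompl : (T.card : ℝ) + Tᶜ.card = Fintype.card ι := by
    exact_mod_cast T.card_add_card_compl
  have hcompl₀ : (0 : ℝ) ≤ Tᶜ.card := Nat.cast_nonneg _
  obtain ⟨t, ht⟩ : ∃ t : ℝ, t = 1 - Tᶜ.card / (Fintype.card ι - 1) := ⟨_, rfl⟩
  have ht₀ : 0 ≤ t := by
    rw [ht, sub_nonneg]
    exact div_le_one_of_le₀ (by linarith) (by linarith)
  have ht₁ : t ≤ 1 := by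
    rw [ht, sub_le_self_iff]
    exact div_nonneg hcompl₀ (by linarith)
  have htcard : t * (Fintype.card ι - 1) = (T.erase a).card := by
    rw [ht, sub_mul, one_mul, div_mul_cancel_of_imp fun _ => by linarith,
      Finset.cast_card_erase_of_mem ha]
    linarith
  have hjensen : ∫ ω, logFreq T a ω ∂P ≤ ∫ ω, t * logFreq Finset.univ a ω ∂P := by
    refine integral_le_integral_of_lintegral_exp_sub_le_one (integrable_logFreq ha)
      ((integrable_logFreq (Finset.mem_univ a)).const_mul t) ?_
    rw [← hP.lintegral_card_mul_empiricalMeasure_div_eq_one ha]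
    exact lintegral_mono fun ω =>
      ENNReal.ofReal_le_of_le_toReal (exp_logFreq_sub_mul_le ht₀ ht₁ htcard ha ω)
  rw [integral_const_mul, ht] at hjensen
  exact (sub_le_sub_right hjensen _).trans_eq (by ring)

end Subsample

section Entropy

variable {S : Type*} [MeasurableSpace S] {μ : Measure S}

lemma shannonEntropy_nonneg [IsProbabilityMeasure μ] : 0 ≤ shannonEntropy μ :=
  tsum_nonneg fun _ => neg_nonneg.2 <| mul_nonpos_of_nonneg_of_nonpos ENNReal.toReal_nonneg <|
    Real.log_nonpos ENNReal.toReal_nonneg measureReal_le_one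

variable [Countable S]

lemma ae_measure_map_singleton_ne_zero {Ω : Type*} [MeasurableSpace Ω] (P : Measure Ω)
    {X : Ω → S} (hX : AEMeasurable X P) :
    ∀ᵐ ω ∂P, P.map X {X ω} ≠ 0 :=
  ae_of_ae_map hX (ae_iff_of_countable.2 fun _ hx => hx)

variable [MeasurableSingletonClass S]

lemma integrable_log_measure_singleton [IsFiniteMeasure μ]
    (h : Summable fun x : S => -((μ {x}).toReal * Real.log (μ {x}).toReal)) :
    Integrable (fun x => Real.log (μ {x}).toReal) μ := by
  refine ⟨Measurable.of_discrete.aestronglyMeasurable, ?_⟩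
  have hterm (x : S) : ‖Real.log (μ {x}).toReal‖ₑ * μ {x} =
      ENNReal.ofReal |-((μ {x}).toReal * Real.log (μ {x}).toReal)| := by
    rw [abs_neg, abs_mul, ENNReal.abs_toReal, ENNReal.ofReal_mul ENNReal.toReal_nonneg,
      ENNReal.ofReal_toReal (measure_ne_top _ _), Real.enorm_eq_ofReal_abs, mul_comm]
  rw [hasFiniteIntegral_iff_enorm, lintegral_countable']
  simpa only [hterm] using h.abs.tsum_ofReal_lt_top

lemma shannonEntropy_eq_neg_integral
    (h : Integrable (fun x => Real.log (μ {x}).toReal) μ) :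
    shannonEntropy μ = -∫ x, Real.log (μ {x}).toReal ∂μ := by
  rw [integral_countable h, shannonEntropy, tsum_neg]
  rfl

variable {ι : Type*} [Fintype ι] {P : Measure (ι → S)} [IsProbabilityMeasure P]

lemma Exchangeable.neg_integral_logFreq_le_shannonEntropy (hP : Exchangeable P) (a : ι)
    (h : Summable fun x : S => -((P.map (fun ω => ω a) {x}).toReal *
      Real.log (P.map (fun ω => ω a) {x}).toReal)) :
    -∫ ω, logFreq Finset.univ a ω ∂P ≤ shannonEntropy (P.map fun ω => ω a) := by
  have hmem := Finset.mem_univ a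
  have heval : Measurable fun ω : ι → S => ω a := measurable_pi_apply a
  have := Measure.isProbabilityMeasure_map (μ := P) heval.aemeasurable
  have hlog := integrable_log_measure_singleton h
  rw [shannonEntropy_eq_neg_integral hlog, neg_le_neg_iff,
    integral_map heval.aemeasurable Measurable.of_discrete.aestronglyMeasurable]
  refine integral_le_integral_of_lintegral_exp_sub_le_one (hlog.comp_measurable heval)
    (integrable_logFreq hmem) ?_
  calc ∫⁻ ω, ENNReal.ofReal (Real.exp
        (Real.log (P.map (fun ω => ω a) {ω a}).toReal - logFreq Finset.univ a ω)) ∂P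
      = ∫⁻ ω, P.map (fun ω => ω a) {ω a} / empiricalMeasure Finset.univ ω {ω a} ∂P := by
        refine lintegral_congr_ae ?_
        filter_upwards [ae_measure_map_singleton_ne_zero P heval.aemeasurable] with ω hω
        exact ofReal_exp_log_sub_log hω (measure_ne_top _ _)
          (empiricalMeasure_singleton_self_ne_zero hmem ω) (measure_ne_top _ _)
    _ = ∫⁻ ω, ∫⁻ s, P.map (fun ω => ω a) {s} / empiricalMeasure Finset.univ ω {s}
          ∂empiricalMeasure Finset.univ ω ∂P :=
        hP.lintegral_apply_eq_lintegral_empiricalMeasure hmem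
          (Φ := fun ω s => P.map (fun ω => ω a) {s} / empiricalMeasure Finset.univ ω {s})
          fun σ hσ ω => by simp only [permInvariantOn_empiricalMeasure Finset.univ σ hσ ω]
    _ ≤ ∫⁻ _, ∫⁻ _, 1 ∂P.map (fun ω => ω a) ∂P := by
        refine lintegral_mono fun ω => ?_
        simpa only [one_mul] using
          lintegral_mul_singleton_div_le (empiricalMeasure Finset.univ ω) _ fun _ => 1
    _ = 1 := by simp

lemma Exchangeable.integral_logFreq_sub_le_shannonEntropy [DecidableEq ι] (hP : Exchangeable P)
    {T : Finset ι} {a : ι} (ha : a ∈ T) (b : ι)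
    (h : Summable fun x : S => -((P.map (fun ω => ω b) {x}).toReal *
      Real.log (P.map (fun ω => ω b) {x}).toReal)) :
    ∫ ω, logFreq T a ω ∂P - ∫ ω, logFreq Finset.univ a ω ∂P ≤
      Tᶜ.card * (shannonEntropy (P.map fun ω => ω b) / (Fintype.card ι - 1)) := by
  have hcard : (1 : ℝ) ≤ Fintype.card ι := by exact_mod_cast Fintype.card_pos_iff.2 ⟨a⟩
  have : 0 ≤ (Fintype.card ι : ℝ) - 1 := sub_nonneg.2 hcard
  rw [hP.map_eval_eq b a] at h ⊢
  refine (hP.integral_logFreq_sub_le ha).trans ?_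
  gcongr
  exact hP.neg_integral_logFreq_le_shannonEntropy a h

end Entropy

section Bound

lemma sum_fin_val_eq (k : ℕ) : ∑ i : Fin k, (i : ℝ) = k * (k - 1) / 2 := by
  rw [Fin.sum_univ_eq_sum_range (fun i => (i : ℝ)) k, ← Nat.cast_sum, Finset.sum_range_id,
    ← Nat.choose_two_right, Nat.cast_choose_two]

lemma card_compl_Ici_castLE {n k : ℕ} (hkn : k ≤ n) (i : Fin k) :
    (Finset.Ici (Fin.castLE hkn i))ᶜ.card = i := by
  rw [Finset.card_compl, Fin.card_Ici, Fintype.card_fin, Fin.val_castLE]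
  omega

lemma mul_sub_one_div_mul_le {n k : ℕ} (hkn : k ≤ n - 2) {H : ℝ} (hH : 0 ≤ H) :
    (k * (k - 1) : ℝ) / (2 * ((n : ℝ) - 1)) * H ≤
      (k * (k - 1) : ℝ) / (2 * ((n : ℝ) - k - 1)) * H := by
  rcases k.eq_zero_or_pos with rfl | hk
  · simp
  have hk₁ : (1 : ℝ) ≤ k := by exact_mod_cast hk
  have hn : (k : ℝ) + 2 ≤ n := by exact_mod_cast (by omega : k + 2 ≤ n)
  have : 0 ≤ (k : ℝ) - 1 := by linarith
  have : 0 < 2 * ((n : ℝ) - k - 1) := by linarith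
  gcongr
  linarith

end Bound

/- When `n = 1` the coefficient is `0 / 0 = 0`, the correct value since then `P₁ = M₁`. -/
theorem finite_deFinetti_relEntropy_entropyBound_general
    {S : Type*} [Countable S] [MeasurableSpace S] [MeasurableSingletonClass S] {n : ℕ}
    (hn : 0 < n)
    (P : Measure (Fin n → S)) [IsProbabilityMeasure P]
    (hexch : ∀ σ : Equiv.Perm (Fin n), P.map (fun x => x ∘ σ) = P)
    (hH : Summable fun x : S =>
      -((P.map (fun ω => ω ⟨0, hn⟩) {x}).toReal *
          Real.log (P.map (fun ω => ω ⟨0, hn⟩) {x}).toReal)) :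
    ∃ μn : Measure (ProbabilityMeasure S), IsProbabilityMeasure μn ∧
      ∀ (k : ℕ) (hkn : k ≤ n) (M : Measure (Fin k → S)),
        (∀ A : Set (Fin k → S), MeasurableSet A →
            M A = ∫⁻ Q : ProbabilityMeasure S,
              Measure.pi (fun _ : Fin k => (Q : Measure S)) A ∂μn) →
        klDiv (P.map (fun x (i : Fin k) => x (Fin.castLE hkn i))) M ≤
          ENNReal.ofReal ((k * (k - 1) : ℝ) / (2 * ((n : ℝ) - 1)) *
            shannonEntropy (P.map (fun ω => ω ⟨0, hn⟩))) := by
  have : NeZero n := ⟨hn.ne'⟩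
  have hP : Exchangeable P := hexch
  refine ⟨P.map empiricalProbability,
    Measure.isProbabilityMeasure_map Measurable.of_discrete.aemeasurable, fun k hkn M hM => ?_⟩
  obtain rfl : M = iidMixture k (P.map empiricalProbability) :=
    Measure.ext fun A hA => (hM A hA).trans (iidMixture_apply k _ hA).symm
  refine (hP.klDiv_map_iidMixture_le hkn).trans (ENNReal.ofReal_le_ofReal ?_)
  calc ∑ i : Fin k, (∫ ω, logFreq (Finset.Ici (Fin.castLE hkn i)) (Fin.castLE hkn i) ω ∂P -
          ∫ ω, logFreq Finset.univ (Fin.castLE hkn i) ω ∂P)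
      ≤ ∑ i : Fin k, (i : ℝ) * (shannonEntropy (P.map fun ω => ω ⟨0, hn⟩) / (n - 1)) :=
        Finset.sum_le_sum fun i _ => by
          simpa only [card_compl_Ici_castLE, Fintype.card_fin] using
            hP.integral_logFreq_sub_le_shannonEntropy
              (Finset.mem_Ici.2 (le_refl (Fin.castLE hkn i))) ⟨0, hn⟩ hH
    _ = (k * (k - 1) : ℝ) / (2 * ((n : ℝ) - 1)) *
          shannonEntropy (P.map (fun ω => ω ⟨0, hn⟩)) := by
        rw [← Finset.sum_mul, sum_fin_val_eq, div_mul_div_comm, div_mul_eq_mul_div]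

/-- **Finite de Finetti theorem in relative entropy with an entropy-dependent bound**
(Gavalakis–Berta). If `P` is the (exchangeable) joint law of `X₁,…,Xₙ` with values
in a discrete (finite or countably infinite) set `S` with `H(X₁)` finite, then there is a
probability measure `μ*ₙ` on `(ℳ(S),ℱ)` such that, for every `k ≤ n − 2`, the law `P_k` of
`X₁,…,X_k` satisfies `D(P_k ‖ M_{k,μ*ₙ}) ≤ (k(k−1)/(2(n−k−1))) · H(X₁)`. -/
theorem finite_deFinetti_relEntropy_entropyBound
    {S : Type*} [Countable S] [MeasurableSpace S] [MeasurableSingletonClass S] {n : ℕ}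
    (hn : 0 < n)
    (P : Measure (Fin n → S)) [IsProbabilityMeasure P]
    (hexch : ∀ σ : Equiv.Perm (Fin n), P.map (fun x => x ∘ σ) = P)
    (hH : Summable fun x : S =>
      -((P.map (fun ω => ω ⟨0, hn⟩) {x}).toReal *
          Real.log (P.map (fun ω => ω ⟨0, hn⟩) {x}).toReal)) :
    ∃ μn : Measure (ProbabilityMeasure S), IsProbabilityMeasure μn ∧
      ∀ (k : ℕ) (hkn : k ≤ n - 2) (M : Measure (Fin k → S)),
        (∀ A : Set (Fin k → S), MeasurableSet A →
            M A = ∫⁻ Q : ProbabilityMeasure S,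
              Measure.pi (fun _ : Fin k => (Q : Measure S)) A ∂μn) →
        klDiv (P.map (fun x (i : Fin k) =>
            x (Fin.castLE (le_trans hkn (Nat.sub_le n 2)) i))) M ≤
          ENNReal.ofReal ((k * (k - 1) : ℝ) / (2 * ((n : ℝ) - k - 1)) *
            shannonEntropy (P.map (fun ω => ω ⟨0, hn⟩))) := by
  have : IsProbabilityMeasure (P.map fun ω => ω ⟨0, hn⟩) :=
    Measure.isProbabilityMeasure_map (measurable_pi_apply _).aemeasurable
  obtain ⟨μn, hμn, hle⟩ := finite_deFinetti_relEntropy_entropyBound_general hn P hexch hH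
  exact ⟨μn, hμn, fun k hkn M hM => (hle k (hkn.trans (Nat.sub_le n 2)) M hM).trans
    (ENNReal.ofReal_le_ofReal (mul_sub_one_div_mul_le hkn shannonEntropy_nonneg))⟩
end
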